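/- arXiv:1907.02712 — 2 statements merged into one kernel-verified Lean document; each statement's English description precedes it below -/
import Mathlib

section
/- Assume the energy is κ-uniformly convex (no smallness assumption on |ℓ|_Lip). Then there exists C > 0, independent of τ, such that the interpolants z̃_τ of the local incremental minimization scheme, built on the iterates at which the time update proceeds, satisfy ‖z(t) − z̃_τ(t)‖_Z ≤ C √τ for all t ∈ [0,T], where z ∈ C^{0,1}([0,T];Z) is the unique differential solution of the rate-independent system. -/
open MeasureTheory
open scoped RealInnerProductSpace NNReal

noncomputable section

namespace RIS

variable {Z V X : Type*}
  [NormedAddCommGroup Z] [InnerProductSpace ℝ Z] [CompleteSpace Z]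
  [NormedAddCommGroup V] [InnerProductSpace ℝ V] [CompleteSpace V]
  [NormedAddCommGroup X] [NormedSpace ℝ X]

/-- The convex subdifferential of `R : V → ℝ` at `u`, as a subset of the dual `V →L[ℝ] ℝ`. -/
def subdiff (R : V → ℝ) (u : V) : Set (V →L[ℝ] ℝ) :=
  {ξ | ∀ v : V, R u + ξ (v - u) ≤ R v}

/-- The semilinear energy `I(t,z) = ½⟨Az,z⟩ + F(z) − ⟨ℓ(t), z⟩`. -/
def energy (A : Z →L[ℝ] Z →L[ℝ] ℝ) (F : Z → ℝ) (ℓ : ℝ → V →L[ℝ] ℝ)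
    (ι : Z →L[ℝ] V) (t : ℝ) (z : Z) : ℝ :=
  (1 / 2 : ℝ) * A z z + F z - ℓ t (ι z)

/-- `D_z I(t,z) = Az + D_zF(z) − ℓ(t)`, as an element of `Z*` (here `D_zF(z)` and `ℓ(t)`
are elements of `V*`, composed with the embedding `ι : Z ↪ V`). -/
def DI (A : Z →L[ℝ] Z →L[ℝ] ℝ) (DF : Z → V →L[ℝ] ℝ) (ℓ : ℝ → V →L[ℝ] ℝ)
    (ι : Z →L[ℝ] V) (t : ℝ) (z : Z) : Z →L[ℝ] ℝ :=
  A z + (DF z).comp ι - (ℓ t).comp ι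

/-- Local stability: `0 ∈ ∂R(0) + D_z I(t,z)`. -/
def LocStable (R : V → ℝ) (A : Z →L[ℝ] Z →L[ℝ] ℝ) (DF : Z → V →L[ℝ] ℝ)
    (ℓ : ℝ → V →L[ℝ] ℝ) (ι : Z →L[ℝ] V) (t : ℝ) (z : Z) : Prop :=
  ∃ ξ ∈ subdiff R 0, ξ.comp ι + DI A DF ℓ ι t z = 0

/-- The local incremental minimization scheme with step size `τ`:
`z_{k+1}` minimizes `I(t_k, ·) + R(· − z_k)` over the ball `‖· − z_k‖_V ≤ τ`
and `t_{k+1} = min{t_k + τ − ‖z_{k+1} − z_k‖_V, T}`, starting from `t_0 = 0`, `z_0 = z₀`. -/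
def Scheme (A : Z →L[ℝ] Z →L[ℝ] ℝ) (F : Z → ℝ) (R : V → ℝ) (ℓ : ℝ → V →L[ℝ] ℝ)
    (ι : Z →L[ℝ] V) (T τ : ℝ) (z₀ : Z) (t : ℕ → ℝ) (z : ℕ → Z) : Prop :=
  t 0 = 0 ∧ z 0 = z₀ ∧
    ∀ k : ℕ,
      ‖ι (z (k + 1) - z k)‖ ≤ τ ∧
      (∀ w : Z, ‖ι (w - z k)‖ ≤ τ →
        energy A F ℓ ι (t k) (z (k + 1)) + R (ι (z (k + 1) - z k)) ≤
          energy A F ℓ ι (t k) w + R (ι (w - z k))) ∧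
      t (k + 1) = min (t k + τ - ‖ι (z (k + 1) - z k)‖) T

/-- Standing assumptions on the data of the rate-independent system. -/
def StandingAssumptions (ι : Z →L[ℝ] V) (ιX : V →L[ℝ] X)
    (A : Z →L[ℝ] Z →L[ℝ] ℝ) (α : ℝ) (F : Z → ℝ) (DF : Z → V →L[ℝ] ℝ)
    (D2F : Z → Z →L[ℝ] V →L[ℝ] ℝ) (R : V → ℝ) (ℓ : ℝ → V →L[ℝ] ℝ)
    (L T : ℝ) : Prop :=
  Function.Injective (ι : Z → V) ∧ DenseRange (ι : Z → V) ∧ (∀ w : Z, ‖ι w‖ ≤ ‖w‖) ∧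
  Function.Injective (ιX : V → X) ∧
  (∀ z w : Z, A z w = A w z) ∧ 0 < α ∧ (∀ w : Z, α * ‖w‖ ^ 2 ≤ A w w) ∧
  (∀ w : Z, 0 ≤ F w) ∧
  (∀ w : Z, HasFDerivAt F ((DF w).comp ι) w) ∧
  (∀ w : Z, HasFDerivAt DF (D2F w) w) ∧
  (∃ CF q : ℝ, 0 < CF ∧ 1 ≤ q ∧ ∀ w v : Z, ‖D2F w v‖ ≤ CF * (1 + ‖w‖ ^ q) * ‖v‖) ∧
  0 ≤ L ∧ LipschitzOnWith (Real.toNNReal L) ℓ (Set.Icc 0 T) ∧ 0 < T ∧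
  ConvexOn ℝ Set.univ R ∧ LowerSemicontinuous R ∧ (∀ v : V, 0 ≤ R v) ∧
  (∀ (c : ℝ) (v : V), 0 ≤ c → R (c • v) = c * R v) ∧
  (∃ ρ₁ ρ₂ : ℝ, 0 < ρ₁ ∧ 0 < ρ₂ ∧ ∀ v : V, ρ₁ * ‖ιX v‖ ≤ R v ∧ R v ≤ ρ₂ * ‖v‖)

/-- `κ`-uniform convexity of the energy: `⟨D²_zI(t,z)v,v⟩ ≥ κ‖v‖²_Z`, where
`D²_zI(t,z)[v,v] = ⟨Av,v⟩ + ⟨D²F(z)v, v⟩`. -/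
def UniformlyConvex (A : Z →L[ℝ] Z →L[ℝ] ℝ) (D2F : Z → Z →L[ℝ] V →L[ℝ] ℝ)
    (ι : Z →L[ℝ] V) (κ : ℝ) : Prop :=
  0 < κ ∧ ∀ w v : Z, κ * ‖v‖ ^ 2 ≤ A v v + D2F w v (ι v)

/-- A differential solution of the rate-independent system: `y ∈ W^{1,1}(0,T;Z)`,
`y(0) = z₀` and `0 ∈ ∂R(y'(t)) + D_zI(t, y(t))` for a.e. `t ∈ (0,T)`. -/
def IsDiffSol (A : Z →L[ℝ] Z →L[ℝ] ℝ) (DF : Z → V →L[ℝ] ℝ) (ℓ : ℝ → V →L[ℝ] ℝ)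
    (R : V → ℝ) (ι : Z →L[ℝ] V) (T : ℝ) (z₀ : Z) (y : ℝ → Z) : Prop :=
  y 0 = z₀ ∧
  ∃ y' : ℝ → Z,
    IntervalIntegrable y' volume 0 T ∧
    (∀ s ∈ Set.Icc (0 : ℝ) T, y s = z₀ + ∫ r in (0 : ℝ)..s, y' r) ∧
    (∀ᵐ s ∂(volume.restrict (Set.Ioo (0 : ℝ) T)),
      ∃ ξ ∈ subdiff R (ι (y' s)), ξ.comp ι + DI A DF ℓ ι s (y s) = 0)


lemma aux_taylor {W G : Type*} [NormedAddCommGroup W] [NormedSpace ℝ W]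
    [NormedAddCommGroup G] [NormedSpace ℝ G] (f : W → G) (f' : W → W →L[ℝ] G)
    (hf : ∀ x, HasFDerivAt f (f' x) x) (r M : ℝ)
    (hM : ∀ u v : W, ‖u‖ ≤ r → ‖v‖ ≤ r → ‖f' u - f' v‖ ≤ M * ‖u - v‖) (hM0 : 0 ≤ M)
    (x y : W) (hx : ‖x‖ ≤ r) (hy : ‖y‖ ≤ r) :
    ‖f y - f x - f' x (y - x)‖ ≤ M * ‖y - x‖ ^ 2 := by
  have hball : ∀ u ∈ segment ℝ x y, ‖u‖ ≤ r := by
    intro u hu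
    have := (convex_closedBall (0 : W) r).segment_subset (by simpa using hx) (by simpa using hy) hu
    simpa using this
  have h := Convex.norm_image_sub_le_of_norm_hasFDerivWithin_le' (s := segment ℝ x y)
    (f := f) (f' := f') (φ := f' x) (C := M * ‖y - x‖) (x := x) (y := y)
    (fun u _ => (hf u).hasFDerivWithinAt) ?_ (convex_segment x y)
    (left_mem_segment ℝ x y) (right_mem_segment ℝ x y)
  · calc _ ≤ _ := h
      _ = _ := by ring
  · intro u hu
    refine (hM u x (hball u hu) hx).trans ?_
    gcongr
    obtain ⟨c, ⟨hc0, hc1⟩, rfl⟩ := (segment_eq_image' ℝ x y) ▸ hu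
    have : x + c • (y - x) - x = c • (y - x) := by abel
    show ‖x + c • (y - x) - x‖ ≤ _
    rw [this, norm_smul, Real.norm_eq_abs, abs_of_nonneg hc0]
    exact mul_le_of_le_one_left (norm_nonneg _) hc1

lemma aux_lip {W G : Type*} [NormedAddCommGroup W] [NormedSpace ℝ W]
    [NormedAddCommGroup G] [NormedSpace ℝ G] (f : W → G) (f' : W → W →L[ℝ] G)
    (hf : ∀ x, HasFDerivAt f (f' x) x) (r M : ℝ)
    (hM : ∀ u : W, ‖u‖ ≤ r → ‖f' u‖ ≤ M)
    (x y : W) (hx : ‖x‖ ≤ r) (hy : ‖y‖ ≤ r) :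
    ‖f y - f x‖ ≤ M * ‖y - x‖ :=
  Convex.norm_image_sub_le_of_norm_hasFDerivWithin_le (s := Metric.closedBall (0 : W) r)
    (fun u _ => (hf u).hasFDerivWithinAt) (fun u hu => hM u (by simpa using hu))
    (convex_closedBall _ _) (by simpa using hx) (by simpa using hy)

lemma aux_mono {W : Type*} [NormedAddCommGroup W] [NormedSpace ℝ W]
    (dE : W → W →L[ℝ] ℝ) (d2E : W → W →L[ℝ] W →L[ℝ] ℝ)
    (h2 : ∀ x, HasFDerivAt dE (d2E x) x) (κ : ℝ)
    (hκ : ∀ x v, κ * ‖v‖ ^ 2 ≤ d2E x v v) (x v : W) :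
    κ * ‖v‖ ^ 2 ≤ dE (x + v) v - dE x v := by
  have hline : ∀ θ : ℝ, HasDerivAt (fun θ : ℝ => x + θ • v) v θ := by
    intro θ
    simpa using ((hasDerivAt_id θ).smul_const v).const_add x
  have hd : ∀ θ : ℝ, HasDerivAt (fun θ : ℝ => dE (x + θ • v) v - θ * (κ * ‖v‖ ^ 2))
      (d2E (x + θ • v) v v - κ * ‖v‖ ^ 2) θ := by
    intro θ
    have h := (h2 (x + θ • v)).comp_hasDerivAt θ (hline θ)
    have h' := h.clm_apply (hasDerivAt_const θ v)
    have h'' := h'.sub ((hasDerivAt_id θ).mul_const (κ * ‖v‖ ^ 2))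
    exact h''.congr_deriv (by simp)
  have hm : Monotone (fun θ : ℝ => dE (x + θ • v) v - θ * (κ * ‖v‖ ^ 2)) := by
    apply monotone_of_deriv_nonneg (fun θ => (hd θ).differentiableAt)
    intro θ
    rw [(hd θ).deriv]
    linarith [hκ (x + θ • v) v]
  have := hm (zero_le_one)
  simp at this
  linarith

lemma aux_breg {W : Type*} [NormedAddCommGroup W] [NormedSpace ℝ W]
    (E : W → ℝ) (dE : W → W →L[ℝ] ℝ) (d2E : W → W →L[ℝ] W →L[ℝ] ℝ)
    (h1 : ∀ x, HasFDerivAt E (dE x) x)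
    (h2 : ∀ x, HasFDerivAt dE (d2E x) x) (κ : ℝ)
    (hκ : ∀ x v, κ * ‖v‖ ^ 2 ≤ d2E x v v) (x y : W) :
    κ / 2 * ‖y - x‖ ^ 2 ≤ E y - E x - dE x (y - x) := by
  set v := y - x with hv
  have hline : ∀ θ : ℝ, HasDerivAt (fun θ : ℝ => x + θ • v) v θ := by
    intro θ
    simpa using ((hasDerivAt_id θ).smul_const v).const_add x
  have hd : ∀ θ : ℝ, HasDerivAt
      (fun θ : ℝ => E (x + θ • v) - θ * dE x v - θ ^ 2 * (κ / 2 * ‖v‖ ^ 2))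
      (dE (x + θ • v) v - dE x v - θ * (κ * ‖v‖ ^ 2)) θ := by
    intro θ
    have h := (h1 (x + θ • v)).comp_hasDerivAt θ (hline θ)
    have h'' := (h.sub ((hasDerivAt_id θ).mul_const (dE x v))).sub
      (((hasDerivAt_id θ).pow 2).mul_const (κ / 2 * ‖v‖ ^ 2))
    exact h''.congr_deriv (by simp; ring)
  have hm : MonotoneOn
      (fun θ : ℝ => E (x + θ • v) - θ * dE x v - θ ^ 2 * (κ / 2 * ‖v‖ ^ 2)) (Set.Icc 0 1) := by
    apply monotoneOn_of_deriv_nonneg (convex_Icc 0 1)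
    · exact fun θ _ => (hd θ).continuousAt.continuousWithinAt
    · exact fun θ _ => (hd θ).differentiableAt.differentiableWithinAt
    · intro θ hθ
      rw [interior_Icc] at hθ
      rw [(hd θ).deriv]
      have h := aux_mono dE d2E h2 κ hκ x (θ • v)
      rw [norm_smul, Real.norm_eq_abs, abs_of_pos hθ.1] at h
      simp only [map_smul, smul_eq_mul] at h
      have h0 : 0 ≤ θ * (dE (x + θ • v) v - dE x v - θ * (κ * ‖v‖ ^ 2)) := by nlinarith
      exact nonneg_of_mul_nonneg_right h0 hθ.1
  have := hm (by simp) (by simp) (zero_le_one' ℝ)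
  have hxy : x + v = y := by rw [hv]; abel
  simp [hxy] at this
  linarith

lemma aux_polar {W : Type*} [NormedAddCommGroup W] [InnerProductSpace ℝ W]
    (B : W →L[ℝ] W →L[ℝ] ℝ) (hs : ∀ v w, B v w = B w v) (c : ℝ) (hc : 0 ≤ c)
    (hB : ∀ v, |B v v| ≤ c * ‖v‖ ^ 2) : ‖B‖ ≤ c := by
  have key : ∀ v w, |B v w| ≤ c / 2 * (‖v‖ ^ 2 + ‖w‖ ^ 2) := by
    intro v w
    have h1 := hB (v + w)
    have h2 := hB (v - w)
    have h3 := parallelogram_law_with_norm ℝ v w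
    have e1 : B (v + w) (v + w) = B v v + 2 * B v w + B w w := by
      simp [hs w v]; ring
    have e2 : B (v - w) (v - w) = B v v - 2 * B v w + B w w := by
      simp [hs w v]; ring
    rw [e1] at h1
    rw [e2] at h2
    rw [abs_le] at *
    have h4 : c * ‖v + w‖ ^ 2 + c * ‖v - w‖ ^ 2 = 2 * c * (‖v‖ ^ 2 + ‖w‖ ^ 2) := by
      have : ‖v + w‖ ^ 2 + ‖v - w‖ ^ 2 = 2 * (‖v‖ ^ 2 + ‖w‖ ^ 2) := by nlinarith
      rw [← mul_add, this]; ring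
    constructor <;> linarith [h1.1, h1.2, h2.1, h2.2]
  refine ContinuousLinearMap.opNorm_le_bound₂ _ hc ?_
  intro v w
  rw [Real.norm_eq_abs]
  rcases eq_or_ne v 0 with rfl | hv
  · simp
  rcases eq_or_ne w 0 with rfl | hw
  · simp
  have hv' : 0 < ‖v‖ := norm_pos_iff.2 hv
  have hw' : 0 < ‖w‖ := norm_pos_iff.2 hw
  have h := key (‖v‖⁻¹ • v) (‖w‖⁻¹ • w)
  rw [norm_smul, norm_smul] at h
  simp only [norm_inv, norm_norm, map_smul, _root_.smul_apply, smul_eq_mul,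
    inv_mul_cancel₀ hv'.ne', inv_mul_cancel₀ hw'.ne', abs_mul, abs_inv, abs_norm] at h
  have h' : ‖w‖⁻¹ * (‖v‖⁻¹ * |B v w|) = |B v w| / (‖v‖ * ‖w‖) := by field_simp
  have h'' : |B v w| / (‖v‖ * ‖w‖) ≤ c := by
    rw [← h']
    linarith
  rw [div_le_iff₀ (by positivity)] at h''
  linarith

lemma aux_gronwall (f : ℝ → ℝ) (K : ℝ≥0) (a b c η : ℝ) (ha : 0 ≤ a) (hc : 0 ≤ c) (hη : 0 ≤ η)
    (hf : LipschitzOnWith K f (Set.Icc a b))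
    (hd : ∀ᵐ s : ℝ, s ∈ Set.Ioo a b → ∃ d, HasDerivAt f d s ∧ d ≤ c * f s + η) :
    ∀ s ∈ Set.Icc a b, Real.exp (-c * s) * f s - η * s ≤ Real.exp (-c * a) * f a - η * a := by
  intro s hs
  set g : ℝ → ℝ := fun s => Real.exp (-c * s) * f s - η * s with hg
  have hAC : AbsolutelyContinuousOnInterval g a s := by
    have hfs : AbsolutelyContinuousOnInterval f a s := by
      apply LipschitzOnWith.absolutelyContinuousOnInterval (K := K)
      rw [Set.uIcc_of_le hs.1]
      exact hf.mono (Set.Icc_subset_Icc_right hs.2)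
    have he : AbsolutelyContinuousOnInterval (fun s => Real.exp (-c * s)) a s :=
      ContDiffOn.absolutelyContinuousOnInterval (by fun_prop)
    have hl : AbsolutelyContinuousOnInterval (fun s => η * s) a s :=
      ContDiffOn.absolutelyContinuousOnInterval (by fun_prop)
    exact (he.mul hfs).sub hl
  have hint := hAC.integral_deriv_eq_sub
  have hle : ∫ x in a..s, deriv g x ≤ 0 := by
    rw [intervalIntegral.integral_of_le hs.1]
    apply integral_nonpos_of_ae
    rw [Filter.EventuallyLE, ae_restrict_iff' measurableSet_Ioc]
    have hne : ∀ᵐ x : ℝ, x ≠ s := by simp [ae_iff, measure_singleton]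
    filter_upwards [hd, hne] with x hx hxs hmem
    have hx' : x ∈ Set.Ioo a b :=
      ⟨hmem.1, lt_of_lt_of_le (lt_of_le_of_ne hmem.2 hxs) hs.2⟩
    obtain ⟨d, hd1, hd2⟩ := hx hx'
    have h1 : HasDerivAt (fun s => Real.exp (-c * s)) (Real.exp (-c * x) * (-c)) x := by
      have := ((hasDerivAt_id x).const_mul (-c)).exp
      simpa using this
    have h2 : HasDerivAt g
        (Real.exp (-c * x) * (-c) * f x + Real.exp (-c * x) * d - η) x := by
      have := (h1.mul hd1).sub ((hasDerivAt_id x).const_mul η)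
      exact this.congr_deriv (by simp)
    rw [h2.deriv]
    have hx0 : 0 ≤ x := ha.trans hx'.1.le
    have he1 : Real.exp (-c * x) ≤ 1 := by
      rw [Real.exp_le_one_iff]; nlinarith
    have he0 := Real.exp_pos (-c * x)
    show _ ≤ (0 : ℝ)
    nlinarith
  rw [hint] at hle
  show g s ≤ g a
  linarith

lemma aux_interval {W : Type*} [NormedAddCommGroup W] [NormedSpace ℝ W]
    (E : W → ℝ) (dE : W → W →L[ℝ] ℝ) (d2E : W → W →L[ℝ] W →L[ℝ] ℝ)
    (h1 : ∀ x, HasFDerivAt E (dE x) x)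
    (h2 : ∀ x, HasFDerivAt dE (d2E x) x) (κ : ℝ) (hκ0 : 0 < κ)
    (hκ : ∀ x v, κ * ‖v‖ ^ 2 ≤ d2E x v v)
    (ρ : W → ℝ) (hρ : ∀ (c : ℝ) v, 0 ≤ c → ρ (c • v) = c * ρ v)
    (f : ℝ → W →L[ℝ] ℝ) (L T r M M1 Cr : ℝ) (Ly : ℝ≥0)
    (hM0 : 0 ≤ M) (hM10 : 0 ≤ M1) (hCr0 : 0 ≤ Cr) (hL0 : 0 ≤ L) (hr0 : 0 ≤ r)
    (hfL : ∀ s ∈ Set.Icc 0 T, ∀ u ∈ Set.Icc 0 T, ‖f s - f u‖ ≤ L * |s - u|)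
    (hM1 : ∀ u, ‖u‖ ≤ r → ‖dE u‖ ≤ M1)
    (hM : ∀ u, ‖u‖ ≤ r → ‖d2E u‖ ≤ M)
    (hCr : ∀ u v, ‖u‖ ≤ r → ‖v‖ ≤ r → ‖d2E u - d2E v‖ ≤ Cr * ‖u - v‖)
    (y y' : ℝ → W) (hyLip : LipschitzOnWith Ly y (Set.Icc 0 T))
    (hyr : ∀ s ∈ Set.Icc 0 T, ‖y s‖ ≤ r)
    (hyd : ∀ᵐ s : ℝ, s ∈ Set.Ioo 0 T → HasDerivAt y (y' s) s ∧
      (∀ v, 0 ≤ dE (y s) v - f s v + ρ v) ∧ ρ (y' s) + dE (y s) (y' s) - f s (y' s) ≤ 0)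
    (a b : ℝ) (ha : 0 ≤ a) (hab : a < b) (hbT : b ≤ T) (p q : W)
    (hp : ‖p‖ ≤ r) (hq : ‖q‖ ≤ r) (c1 : ℝ) (hc1 : 0 ≤ c1) (hpq : ‖q - p‖ ≤ c1 * (b - a))
    (hqs : ∀ v, 0 ≤ dE q v - f b v + ρ v)
    (hqE : ρ (q - p) + (E q - f b q) ≤ E p - f b p)
    (η : ℝ) (hη : (M * c1 ^ 2 + (M * c1 + L) * c1 + (M * c1 + L) * Ly) * (b - a) ≤ η) :
    ∀ s ∈ Set.Icc a b,
      Real.exp (-(2 * Cr * Ly / κ) * s) *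
        (E (p + ((s - a) / (b - a)) • (q - p)) - E (y s)
          - dE (y s) (p + ((s - a) / (b - a)) • (q - p) - y s)) - η * s ≤
      Real.exp (-(2 * Cr * Ly / κ) * a) * (E p - E (y a) - dE (y a) (p - y a)) - η * a := by
  have hh : 0 < b - a := sub_pos.2 hab
  set e : W := (b - a)⁻¹ • (q - p) with he
  have hqpe : q - p = (b - a) • e := by
    rw [he, smul_smul, mul_inv_cancel₀ hh.ne', one_smul]
  have hen : ‖e‖ ≤ c1 := by
    rw [he, norm_smul, norm_inv, Real.norm_eq_abs, abs_of_pos hh, inv_mul_le_iff₀ hh]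
    linarith
  set z : ℝ → W := fun s => p + (s - a) • e with hz
  have hzeq : ∀ s, p + ((s - a) / (b - a)) • (q - p) = z s := by
    intro s
    simp only [hz, he, smul_smul, div_eq_mul_inv]
  have hzb : z b = q := by simp only [hz]; rw [← hqpe]; abel
  have hza : z a = p := by simp [hz]
  have hzr : ∀ s ∈ Set.Icc a b, ‖z s‖ ≤ r := by
    intro s hs
    have hmem : z s ∈ segment ℝ p q := by
      rw [segment_eq_image']
      refine ⟨(s - a) / (b - a), ⟨div_nonneg (by linarith [hs.1]) hh.le, ?_⟩, hzeq s⟩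
      rw [div_le_one hh]; linarith [hs.2]
    have := (convex_closedBall (0 : W) r).segment_subset (by simpa using hp) (by simpa using hq) hmem
    simpa using this
  have hzdiff : ∀ s u, z s - z u = (s - u) • e := by
    intro s u
    simp only [hz]
    rw [show s - u = (s - a) - (u - a) by ring, sub_smul (s - a) (u - a)]; abel
  have hzlip : ∀ s u, ‖z s - z u‖ ≤ c1 * |s - u| := by
    intro s u
    rw [hzdiff, norm_smul, Real.norm_eq_abs, mul_comm]
    gcongr
  have hzd : ∀ s, HasDerivAt z e s := by
    intro s
    have := (((hasDerivAt_id s).sub_const a).smul_const e).const_add p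
    exact this.congr_deriv (by simp)
  have hsym : ∀ x v w, d2E x v w = d2E x w v := fun x v w =>
    second_derivative_symmetric h1 (h2 x) v w
  have hab0 : Set.Icc a b ⊆ Set.Icc 0 T := Set.Icc_subset_Icc ha hbT
  have hElip := aux_lip E dE h1 r M1 hM1
  have hdElip := aux_lip dE d2E h2 r M hM
  have hT2 := aux_taylor dE d2E h2 r Cr hCr hCr0
  have hT1 := aux_taylor E dE h1 r M (fun u v hu hv => hdElip v u hv hu) hM0
  have hqe : ρ e + dE q e - f b e ≤ M * c1 ^ 2 * (b - a) := by
    have h := hT1 q p hq hp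
    rw [Real.norm_eq_abs] at h
    have h' := (abs_le.1 h).2
    have e1 : p - q = -((b - a) • e) := by rw [← hqpe]; abel
    have e2 : f b q - f b p = (b - a) * f b e := by
      rw [← map_sub, hqpe, map_smul, smul_eq_mul]
    have e3 : ρ (q - p) = (b - a) * ρ e := by rw [hqpe, hρ _ _ hh.le]
    have e4 : ‖p - q‖ ^ 2 ≤ (c1 * (b - a)) ^ 2 := by
      rw [norm_sub_rev]; gcongr
    have e5 : dE q (p - q) = -((b - a) * dE q e) := by
      rw [e1, map_neg, map_smul, smul_eq_mul]
    rw [e5] at h'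
    have e6 : M * ‖p - q‖ ^ 2 ≤ M * (c1 * (b - a)) ^ 2 := by gcongr
    have : (b - a) * (ρ e + dE q e - f b e) ≤ (b - a) * (M * c1 ^ 2 * (b - a)) := by
      nlinarith
    exact le_of_mul_le_mul_left this hh
  have hη0 : 0 ≤ η := le_trans (by positivity) hη
  set c4 := 2 * Cr * Ly / κ with hc4
  have hc40 : 0 ≤ c4 := by positivity
  set D : ℝ → ℝ := fun s => E (z s) - E (y s) - dE (y s) (z s - y s) with hD
  have hyl : ∀ s ∈ Set.Icc a b, ∀ u ∈ Set.Icc a b, ‖y s - y u‖ ≤ Ly * |s - u| := by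
    intro s hs u hu
    have := hyLip.dist_le_mul s (hab0 hs) u (hab0 hu)
    rwa [dist_eq_norm, Real.dist_eq] at this
  have hDlip : ∃ K : ℝ≥0, LipschitzOnWith K D (Set.Icc a b) := by
    set KK : ℝ := M1 * c1 + M1 * Ly + M * Ly * (2 * r) + M1 * (c1 + Ly) with hKK
    have hKK0 : 0 ≤ KK := by positivity
    refine ⟨⟨KK, hKK0⟩, LipschitzOnWith.of_dist_le_mul ?_⟩
    intro s hs u hu
    rw [Real.dist_eq, Real.dist_eq]
    show |D s - D u| ≤ KK * |s - u|
    have i1 : |E (z s) - E (z u)| ≤ M1 * (c1 * |s - u|) :=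
      (hElip _ _ (hzr u hu) (hzr s hs)).trans (by gcongr; exact hzlip s u)
    have i2 : |E (y s) - E (y u)| ≤ M1 * (Ly * |s - u|) :=
      (hElip _ _ (hyr u (hab0 hu)) (hyr s (hab0 hs))).trans (by gcongr; exact hyl s hs u hu)
    have i3 : |(dE (y s) - dE (y u)) (z s - y s)| ≤ M * (Ly * |s - u|) * (2 * r) := by
      rw [← Real.norm_eq_abs]
      refine (ContinuousLinearMap.le_opNorm _ _).trans ?_
      have j1 : ‖dE (y s) - dE (y u)‖ ≤ M * (Ly * |s - u|) :=
        (hdElip _ _ (hyr u (hab0 hu)) (hyr s (hab0 hs))).trans (by gcongr; exact hyl s hs u hu)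
      have j2 : ‖z s - y s‖ ≤ 2 * r :=
        (norm_sub_le _ _).trans (by linarith [hzr s hs, hyr s (hab0 hs)])
      gcongr
    have i4 : |dE (y u) ((z s - z u) - (y s - y u))| ≤ M1 * (c1 * |s - u| + Ly * |s - u|) := by
      rw [← Real.norm_eq_abs]
      refine (ContinuousLinearMap.le_opNorm _ _).trans ?_
      have j1 := hM1 (y u) (hyr u (hab0 hu))
      have j2 : ‖(z s - z u) - (y s - y u)‖ ≤ c1 * |s - u| + Ly * |s - u| :=
        (norm_sub_le _ _).trans (add_le_add (hzlip s u) (hyl s hs u hu))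
      gcongr
    have heq : D s - D u = (E (z s) - E (z u)) - (E (y s) - E (y u))
        - (dE (y s) - dE (y u)) (z s - y s) - dE (y u) ((z s - z u) - (y s - y u)) := by
      simp only [hD, map_sub, _root_.sub_apply]; ring
    rw [heq]
    have hsum : KK * |s - u| = M1 * (c1 * |s - u|) + M1 * (Ly * |s - u|)
      + M * (Ly * |s - u|) * (2 * r) + M1 * (c1 * |s - u| + Ly * |s - u|) := by
      rw [hKK]; ring
    rw [hsum]
    rw [abs_le] at *
    constructor <;> linarith [i1.1, i1.2, i2.1, i2.2, i3.1, i3.2, i4.1, i4.2]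
  obtain ⟨K, hK⟩ := hDlip
  have hgr := aux_gronwall D K a b c4 η ha hc40 hη0 hK ?_
  · intro s hs
    have := hgr s hs
    simp only [hD, hza] at this
    rw [hzeq s]
    exact this
  filter_upwards [hyd] with s hs hsab
  have hs0T : s ∈ Set.Ioo 0 T := ⟨lt_of_le_of_lt ha hsab.1, lt_of_lt_of_le hsab.2 hbT⟩
  obtain ⟨hy1, hy2, hy3⟩ := hs hs0T
  have hsI : s ∈ Set.Icc a b := Set.Ioo_subset_Icc_self hsab
  have hy'n : ‖y' s‖ ≤ Ly :=
    hy1.le_of_lipschitzOn (Icc_mem_nhds hs0T.1 hs0T.2) hyLip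
  have hder : HasDerivAt D (dE (z s) e - dE (y s) (y' s)
      - (d2E (y s) (y' s) (z s - y s) + dE (y s) (e - y' s))) s := by
    have d1 := (h1 (z s)).comp_hasDerivAt s (hzd s)
    have d2 := (h1 (y s)).comp_hasDerivAt s hy1
    have d3 := ((h2 (y s)).comp_hasDerivAt s hy1).clm_apply ((hzd s).sub hy1)
    exact ((d1.sub d2).sub d3).congr_deriv (by simp)
  refine ⟨_, hder, ?_⟩
  -- the Taylor remainder
  have hrem : |(dE (z s) - dE (y s) - d2E (y s) (z s - y s)) (y' s)| ≤
      Cr * ‖z s - y s‖ ^ 2 * Ly := by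
    rw [← Real.norm_eq_abs]
    refine (ContinuousLinearMap.le_opNorm _ _).trans ?_
    have := hT2 (y s) (z s) (hyr s (hab0 hsI)) (hzr s hsI)
    gcongr
  have hBl := aux_breg E dE d2E h1 h2 κ hκ (y s) (z s)
  have hBl' : Cr * ‖z s - y s‖ ^ 2 * Ly ≤ c4 * D s := by
    have : c4 * (κ / 2 * ‖z s - y s‖ ^ 2) ≤ c4 * D s := by gcongr
    have e0 : c4 * (κ / 2 * ‖z s - y s‖ ^ 2) = Cr * ‖z s - y s‖ ^ 2 * Ly := by
      rw [hc4]; field_simp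
    linarith
  -- consistency
  have hcons : ∀ v, |(dE (z s) - f s) v - (dE q - f b) v| ≤ (M * c1 + L) * (b - a) * ‖v‖ := by
    intro v
    rw [← _root_.sub_apply]
    rw [← Real.norm_eq_abs]
    refine (ContinuousLinearMap.le_opNorm _ _).trans ?_
    gcongr
    have j1 : ‖dE (z s) - dE q‖ ≤ M * (c1 * |s - b|) := by
      have := hdElip q (z s) hq (hzr s hsI)
      refine this.trans ?_
      gcongr
      rw [← hzb]; exact hzlip s b
    have j2 : ‖f s - f b‖ ≤ L * |s - b| :=
      hfL s (hab0 hsI) b ⟨by linarith, hbT⟩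
    have j3 : |s - b| ≤ b - a := by
      rw [abs_le]; constructor <;> linarith [hsab.1, hsab.2]
    calc ‖dE (z s) - f s - (dE q - f b)‖ = ‖(dE (z s) - dE q) - (f s - f b)‖ := by
          congr 1; abel
      _ ≤ _ := norm_sub_le _ _
      _ ≤ M * (c1 * |s - b|) + L * |s - b| := add_le_add j1 j2
      _ = (M * c1 + L) * |s - b| := by ring
      _ ≤ _ := by gcongr
  have k1 := (abs_le.1 (hcons e)).2
  have k2 := (abs_le.1 (hcons (y' s))).1
  have k3 := hqs (y' s)
  have k4 := hy2 e
  have k5 : (M * c1 + L) * (b - a) * ‖e‖ ≤ (M * c1 + L) * (b - a) * c1 := by gcongr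
  have k6 : (M * c1 + L) * (b - a) * ‖y' s‖ ≤ (M * c1 + L) * (b - a) * Ly := by gcongr
  have k7 := (abs_le.1 hrem).2
  simp only [_root_.sub_apply, map_sub] at k1 k2 k7 ⊢
  rw [hsym (y s) (y' s) (z s), hsym (y s) (y' s) (y s)]
  linarith

lemma aux_step {W : Type*} [NormedAddCommGroup W] [NormedSpace ℝ W]
    (E : W → ℝ) (dE : W → W →L[ℝ] ℝ) (d2E : W → W →L[ℝ] W →L[ℝ] ℝ)
    (h1 : ∀ x, HasFDerivAt E (dE x) x)
    (h2 : ∀ x, HasFDerivAt dE (d2E x) x) (κ : ℝ) (hκ0 : 0 < κ)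
    (hκ : ∀ x v, κ * ‖v‖ ^ 2 ≤ d2E x v v)
    (ρ : W → ℝ) (f1 f2 : W →L[ℝ] ℝ) (p q : W)
    (hps : ∀ v, 0 ≤ dE p v - f1 v + ρ v)
    (hqE : ρ (q - p) + (E q - f2 q) ≤ E p - f2 p) :
    ‖q - p‖ ≤ 2 / κ * ‖f2 - f1‖ := by
  have hb := aux_breg E dE d2E h1 h2 κ hκ p q
  have hs := hps (q - p)
  have hn : (f2 - f1) (q - p) ≤ ‖f2 - f1‖ * ‖q - p‖ :=
    (le_abs_self _).trans (by rw [← Real.norm_eq_abs]; exact ContinuousLinearMap.le_opNorm _ _)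
  have hfe : (f2 - f1) (q - p) = f2 q - f2 p - f1 (q - p) := by
    rw [_root_.sub_apply, map_sub f2]
  have hk : κ / 2 * ‖q - p‖ ^ 2 ≤ ‖f2 - f1‖ * ‖q - p‖ := by linarith
  rcases (norm_nonneg (q - p)).eq_or_lt with h0 | h0
  · rw [← h0]; positivity
  · have : κ / 2 * ‖q - p‖ ≤ ‖f2 - f1‖ := by
      apply le_of_mul_le_mul_right _ h0
      linarith
    calc ‖q - p‖ = 2 / κ * (κ / 2 * ‖q - p‖) := by field_simp
      _ ≤ _ := by gcongr

lemma aux_min_stable {W : Type*} [NormedAddCommGroup W] [NormedSpace ℝ W]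
    (E : W → ℝ) (dE : W → W →L[ℝ] ℝ)
    (h1 : ∀ x, HasFDerivAt E (dE x) x) (f : W →L[ℝ] ℝ) (z v : W) (c δ : ℝ) (hδ : 0 < δ)
    (hmin : ∀ ε : ℝ, 0 < ε → ε < δ → E z - f z ≤ E (z + ε • v) - f (z + ε • v) + ε * c) :
    0 ≤ dE z v - f v + c := by
  have hline : HasDerivAt (fun θ : ℝ => z + θ • v) v 0 := by
    simpa using ((hasDerivAt_id (0 : ℝ)).smul_const v).const_add z
  have hE : HasFDerivAt E (dE z) (z + (0 : ℝ) • v) := by simpa using h1 z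
  have hd : HasDerivAt (fun θ : ℝ => E (z + θ • v) - f (z + θ • v) + θ * c)
      (dE z v - f v + c) 0 := by
    have d1 := hE.comp_hasDerivAt (0 : ℝ) hline
    have d2 := (f.hasFDerivAt (x := z + (0 : ℝ) • v)).comp_hasDerivAt (0 : ℝ) hline
    exact ((d1.sub d2).add ((hasDerivAt_id (0 : ℝ)).mul_const c)).congr_deriv (by simp)
  have ht := hd.tendsto_slope_zero_right
  refine ge_of_tendsto ht ?_
  have : Set.Ioo (0 : ℝ) δ ∈ nhdsWithin (0 : ℝ) (Set.Ioi 0) := Ioo_mem_nhdsGT hδ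
  filter_upwards [this] with ε hε
  have := hmin ε hε.1 hε.2
  have hε' := hε.1
  simp only [zero_add, zero_smul, add_zero, zero_mul, smul_eq_mul]
  apply mul_nonneg (by positivity)
  linarith

lemma aux_chain {W : Type*} [NormedAddCommGroup W] [NormedSpace ℝ W]
    (E : W → ℝ) (dE : W → W →L[ℝ] ℝ) (d2E : W → W →L[ℝ] W →L[ℝ] ℝ)
    (h1 : ∀ x, HasFDerivAt E (dE x) x)
    (h2 : ∀ x, HasFDerivAt dE (d2E x) x) (κ : ℝ) (hκ0 : 0 < κ)
    (hκ : ∀ x v, κ * ‖v‖ ^ 2 ≤ d2E x v v)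
    (ρ : W → ℝ) (hρ : ∀ (c : ℝ) v, 0 ≤ c → ρ (c • v) = c * ρ v)
    (f : ℝ → W →L[ℝ] ℝ) (L T r M M1 Cr : ℝ) (Ly : ℝ≥0) (hT : 0 < T)
    (hM0 : 0 ≤ M) (hM10 : 0 ≤ M1) (hCr0 : 0 ≤ Cr) (hL0 : 0 ≤ L) (hr0 : 0 ≤ r)
    (hfL : ∀ s ∈ Set.Icc 0 T, ∀ u ∈ Set.Icc 0 T, ‖f s - f u‖ ≤ L * |s - u|)
    (hM1 : ∀ u, ‖u‖ ≤ r → ‖dE u‖ ≤ M1)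
    (hM : ∀ u, ‖u‖ ≤ r → ‖d2E u‖ ≤ M)
    (hCr : ∀ u v, ‖u‖ ≤ r → ‖v‖ ≤ r → ‖d2E u - d2E v‖ ≤ Cr * ‖u - v‖)
    (y y' : ℝ → W) (hyLip : LipschitzOnWith Ly y (Set.Icc 0 T))
    (hyr : ∀ s ∈ Set.Icc 0 T, ‖y s‖ ≤ r)
    (hyd : ∀ᵐ s : ℝ, s ∈ Set.Ioo 0 T → HasDerivAt y (y' s) s ∧
      (∀ v, 0 ≤ dE (y s) v - f s v + ρ v) ∧ ρ (y' s) + dE (y s) (y' s) - f s (y' s) ≤ 0)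
    (c1 c3 : ℝ) (hc1 : c1 = 2 * L / κ)
    (hc3 : c3 = M * c1 ^ 2 + (M * c1 + L) * c1 + (M * c1 + L) * Ly)
    (hr : ‖y 0‖ + c1 * T ≤ r)
    (τ : ℝ) (hτ : 0 < τ) (n : ℕ) (sh : ℕ → ℝ) (zh : ℕ → W)
    (hs0 : sh 0 = 0) (hz0 : zh 0 = y 0)
    (hsT : ∀ j, sh j ∈ Set.Icc 0 T)
    (hslt : ∀ j, j + 2 ≤ n → sh j < sh (j + 1))
    (hsτ : ∀ j, j + 1 ≤ n → sh (j + 1) - sh j ≤ τ)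
    (hst0 : ∀ v, 0 ≤ dE (zh 0) v - f (sh 0) v + ρ v)
    (hst : ∀ j, j + 1 ≤ n → ∀ v, 0 ≤ dE (zh (j + 1)) v - f (sh j) v + ρ v)
    (hen : ∀ j, j + 1 ≤ n → ρ (zh (j + 1) - zh j) + (E (zh (j + 1)) - f (sh j) (zh (j + 1)))
      ≤ E (zh j) - f (sh j) (zh j)) :
    (∀ i, i + 2 ≤ n → ∀ s ∈ Set.Icc (sh i) (sh (i + 1)),
      ‖y s - (zh (i + 1) + ((s - sh i) / (sh (i + 1) - sh i)) • (zh (i + 2) - zh (i + 1)))‖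
        ≤ Real.sqrt (2 / κ * Real.exp (2 * Cr * Ly / κ * T) * c3 * T) * Real.sqrt τ) ∧
    (∀ i, i + 1 ≤ n → ‖y (sh i) - zh (i + 1)‖
        ≤ Real.sqrt (2 / κ * Real.exp (2 * Cr * Ly / κ * T) * c3 * T) * Real.sqrt τ) := by
  have hc10 : 0 ≤ c1 := by rw [hc1]; positivity
  have hc30 : 0 ≤ c3 := by rw [hc3]; positivity
  have hz1 : 1 ≤ n → zh 1 = zh 0 := by
    intro hn
    have := aux_step E dE d2E h1 h2 κ hκ0 hκ ρ (f (sh 0)) (f (sh 0)) (zh 0) (zh 1) hst0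
      (hen 0 hn)
    simp only [sub_self, norm_zero, mul_zero] at this
    exact sub_eq_zero.1 (norm_le_zero_iff.1 this)
  have hstep : ∀ j, j + 2 ≤ n → ‖zh (j + 2) - zh (j + 1)‖ ≤ c1 * (sh (j + 1) - sh j) := by
    intro j hj
    have h := aux_step E dE d2E h1 h2 κ hκ0 hκ ρ (f (sh j)) (f (sh (j + 1))) (zh (j + 1))
      (zh (j + 2)) (hst j (by omega)) (hen (j + 1) hj)
    refine h.trans ?_
    have h' := hfL (sh (j + 1)) (hsT _) (sh j) (hsT _)
    rw [abs_of_nonneg (by linarith [hslt j hj])] at h'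
    calc 2 / κ * ‖f (sh (j + 1)) - f (sh j)‖ ≤ 2 / κ * (L * (sh (j + 1) - sh j)) := by gcongr
      _ = _ := by rw [hc1]; ring
  have hzb : ∀ j, j + 1 ≤ n → ‖zh (j + 1)‖ ≤ ‖y 0‖ + c1 * sh j := by
    intro j
    induction j with
    | zero => intro hj; rw [zero_add, hz1 hj, hz0, hs0]; simp
    | succ j ih =>
      intro hj
      have i1 := ih (by omega)
      have i2 := hstep j hj
      have i3 : ‖zh (j + 2)‖ ≤ ‖zh (j + 1)‖ + ‖zh (j + 2) - zh (j + 1)‖ := by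
        have := norm_add_le (zh (j + 1)) (zh (j + 2) - zh (j + 1))
        simpa using this
      show ‖zh (j + 2)‖ ≤ _
      linarith
  have hzr : ∀ j, j + 1 ≤ n → ‖zh (j + 1)‖ ≤ r := by
    intro j hj
    have := mul_le_mul_of_nonneg_left (hsT j).2 hc10
    linarith [hzb j hj]
  set c4 := 2 * Cr * Ly / κ with hc4
  have hc40 : 0 ≤ c4 := by positivity
  set η := c3 * τ with hη
  have hη0 : 0 ≤ η := by positivity
  have hint : ∀ i, i + 2 ≤ n → ∀ s ∈ Set.Icc (sh i) (sh (i + 1)), _ := fun i hi =>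
    aux_interval E dE d2E h1 h2 κ hκ0 hκ ρ hρ f L T r M M1 Cr Ly hM0 hM10 hCr0 hL0 hr0 hfL hM1 hM
      hCr y y' hyLip hyr hyd (sh i) (sh (i + 1)) (hsT i).1 (hslt i hi) (hsT _).2
      (zh (i + 1)) (zh (i + 2)) (hzr i (by omega)) (hzr (i + 1) hi) c1 hc10 (hstep i hi)
      (hst (i + 1) hi) (hen (i + 1) hi) η (by
        rw [← hc3, hη]; exact mul_le_mul_of_nonneg_left (hsτ i (by omega)) hc30)
  have hnode : ∀ i, i + 1 ≤ n → Real.exp (-c4 * sh i) *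
      (E (zh (i + 1)) - E (y (sh i)) - dE (y (sh i)) (zh (i + 1) - y (sh i))) - η * sh i ≤ 0 := by
    intro i
    induction i with
    | zero =>
      intro hi
      rw [zero_add, hz1 hi, hs0, hz0]; simp
    | succ i ih =>
      intro hi
      refine le_trans ?_ (ih (by omega))
      have h := hint i hi (sh (i + 1)) ⟨(hslt i hi).le, le_rfl⟩
      have hne : sh (i + 1) - sh i ≠ 0 := (sub_pos.2 (hslt i hi)).ne'
      rw [div_self hne, one_smul, add_sub_cancel] at h
      exact h
  have hfin : ∀ s ∈ Set.Icc 0 T, ∀ w, Real.exp (-c4 * s) *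
      (E w - E (y s) - dE (y s) (w - y s)) - η * s ≤ 0 →
      ‖y s - w‖ ≤ Real.sqrt (2 / κ * Real.exp (c4 * T) * c3 * T) * Real.sqrt τ := by
    intro s hs w hw
    have hb := aux_breg E dE d2E h1 h2 κ hκ (y s) w
    rw [← Real.sqrt_mul (by positivity)]
    apply Real.le_sqrt_of_sq_le
    rw [norm_sub_rev]
    set B := E w - E (y s) - dE (y s) (w - y s) with hB
    have hB1 : B ≤ Real.exp (c4 * T) * (η * T) := by
      have e1 : B = Real.exp (c4 * s) * (Real.exp (-c4 * s) * B) := by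
        rw [← mul_assoc, ← Real.exp_add]; simp
      have e2 : Real.exp (-c4 * s) * B ≤ η * T := by
        have := mul_le_mul_of_nonneg_left hs.2 hη0
        linarith
      rw [e1]
      have e3 : Real.exp (c4 * s) ≤ Real.exp (c4 * T) := by
        apply Real.exp_le_exp.2
        exact mul_le_mul_of_nonneg_left hs.2 hc40
      calc _ ≤ Real.exp (c4 * s) * (η * T) := by gcongr
        _ ≤ _ := by gcongr
    calc ‖w - y s‖ ^ 2 = 2 / κ * (κ / 2 * ‖w - y s‖ ^ 2) := by field_simp
      _ ≤ 2 / κ * (Real.exp (c4 * T) * (η * T)) :=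
        mul_le_mul_of_nonneg_left (hb.trans hB1) (by positivity)
      _ = _ := by rw [hη]; ring
  constructor
  · intro i hi s hs
    exact hfin s ⟨(hsT i).1.trans hs.1, hs.2.trans (hsT _).2⟩ _
      ((hint i hi s hs).trans (hnode i (by omega)))
  · intro i hi
    exact hfin _ (hsT i) _ (hnode i hi)

set_option maxHeartbeats 4000000 in
/-- Theorem 3.17: assume the energy is `κ`-uniformly convex
(no smallness assumption on `|ℓ|_Lip`). Then there is `C > 0`, independent of `τ`,
such that the interpolants `z̃_τ`, built on the iterates at which the time update
proceeds (enumerated by `𝔎`), satisfy `‖y(s) − z̃_τ(s)‖_Z ≤ C √τ` for all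
`s ∈ [0,T]`, where `y ∈ C^{0,1}([0,T];Z)` is the unique differential solution. -/
theorem statement12
    (ι : Z →L[ℝ] V) (ιX : V →L[ℝ] X)
    (A : Z →L[ℝ] Z →L[ℝ] ℝ) (α : ℝ) (F : Z → ℝ) (DF : Z → V →L[ℝ] ℝ)
    (D2F : Z → Z →L[ℝ] V →L[ℝ] ℝ) (R : V → ℝ) (ℓ : ℝ → V →L[ℝ] ℝ) (L T : ℝ)
    (hstand : StandingAssumptions ι ιX A α F DF D2F R ℓ L T)
    (hC21 : ∀ r : ℝ, 0 < r → ∃ Cr : ℝ, 0 ≤ Cr ∧ ∀ z₁ z₂ v : Z,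
      ‖z₁‖ ≤ r → ‖z₂‖ ≤ r →
      D2F z₁ v (ι v) - D2F z₂ v (ι v) ≤ Cr * ‖z₁ - z₂‖ * ‖v‖ ^ 2)
    (κ : ℝ) (hconv : UniformlyConvex A D2F ι κ)
    (z₀ : Z) (hz₀ : LocStable R A DF ℓ ι 0 z₀)
    -- the unique differential solution `y ∈ C^{0,1}([0,T];Z)`:
    (y : ℝ → Z) (hy : IsDiffSol A DF ℓ R ι T z₀ y)
    (hyLip : ∃ Ly : ℝ≥0, LipschitzOnWith Ly y (Set.Icc (0 : ℝ) T))
    (t : ℝ → ℕ → ℝ) (z : ℝ → ℕ → Z)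
    (hscheme : ∀ τ : ℝ, 0 < τ → Scheme A F R ℓ ι T τ z₀ (t τ) (z τ))
    (N : ℝ → ℕ)
    (hN : ∀ τ : ℝ, 0 < τ → t τ (N τ) = T ∧ ∀ j : ℕ, j < N τ → t τ j < T)
    (Nhat : ℝ → ℕ)
    (hNhat : ∀ τ : ℝ, 0 < τ → N τ ≤ Nhat τ ∧ 1 ≤ Nhat τ ∧
      LocStable R A DF ℓ ι (t τ (Nhat τ - 1)) (z τ (Nhat τ)))
    (n : ℝ → ℕ) (K : ℝ → ℕ → ℕ)
    (hK0 : ∀ τ : ℝ, 0 < τ → K τ 0 = 0)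
    (hKlast : ∀ τ : ℝ, 0 < τ → K τ (n τ) = Nhat τ)
    (hKmono : ∀ τ : ℝ, 0 < τ → StrictMonoOn (K τ) (Set.Iic (n τ)))
    (hKmem : ∀ τ : ℝ, 0 < τ → ∀ j : ℕ, j ≤ n τ →
      K τ j = 0 ∨ K τ j = Nhat τ ∨
        (1 ≤ K τ j ∧ K τ j ≤ N τ ∧ t τ (K τ j - 1) < t τ (K τ j)))
    (hKsurj : ∀ τ : ℝ, 0 < τ → ∀ k : ℕ,
      (k = 0 ∨ k = Nhat τ ∨ (1 ≤ k ∧ k ≤ N τ ∧ t τ (k - 1) < t τ k)) →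
      ∃ j : ℕ, j ≤ n τ ∧ K τ j = k) :
    ∃ C : ℝ, 0 < C ∧ ∀ τ : ℝ, 0 < τ →
      (∀ j : ℕ, 1 ≤ j → j + 1 ≤ n τ →
        ∀ s ∈ Set.Ico (t τ (K τ (j - 1))) (t τ (K τ j)),
          ‖y s - (z τ (K τ j) + ((s - t τ (K τ (j - 1))) /
              (t τ (K τ j) - t τ (K τ (j - 1)))) •
              (z τ (K τ (j + 1)) - z τ (K τ j)))‖ ≤ C * Real.sqrt τ) ∧
      ‖y T - z τ (Nhat τ)‖ ≤ C * Real.sqrt τ := by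
  obtain ⟨-, -, hι, -, hAsym, hα, -, hF0, hF1, hF2, ⟨CF, q, hCF, hq, hD2F⟩, hL0, hℓ, hT, hRc, -,
    hR0, hRh, -⟩ := hstand
  obtain ⟨hκ0, hκ⟩ := hconv
  obtain ⟨Ly, hyLip⟩ := hyLip
  obtain ⟨hy0, y', hy'i, hyint, hyae⟩ := hy
  -- abstract energy on `Z`
  set Φ : (V →L[ℝ] ℝ) →L[ℝ] (Z →L[ℝ] ℝ) := (ContinuousLinearMap.compL ℝ Z V ℝ).flip ι with hΦ
  have hΦa : ∀ (g : V →L[ℝ] ℝ) (v : Z), Φ g v = g (ι v) := fun g v => by simp [hΦ]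
  have hΦc : ∀ (g : V →L[ℝ] ℝ), g.comp ι = Φ g := fun g => by simp [hΦ]
  have hΦn : ∀ g, ‖Φ g‖ ≤ ‖g‖ := by
    intro g
    refine ContinuousLinearMap.opNorm_le_bound _ (norm_nonneg _) fun v => ?_
    rw [hΦa]
    refine (ContinuousLinearMap.le_opNorm _ _).trans ?_
    gcongr
    exact hι v
  set E : Z → ℝ := fun w => (1 / 2 : ℝ) * A w w + F w with hE
  set dE : Z → Z →L[ℝ] ℝ := fun w => A w + Φ (DF w) with hdE
  set d2E : Z → Z →L[ℝ] Z →L[ℝ] ℝ := fun w => A + Φ.comp (D2F w) with hd2E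
  set f : ℝ → Z →L[ℝ] ℝ := fun s => Φ (ℓ s) with hf
  set ρ : Z → ℝ := fun v => R (ι v) with hρdef
  have hEn : ∀ s w, energy A F ℓ ι s w = E w - f s w := by
    intro s w; simp only [energy, hE, hf, hΦa]
  have hDI : ∀ s w v, DI A DF ℓ ι s w v = dE w v - f s v := by
    intro s w v
    simp [DI, hdE, hf, hΦa]
  have h1 : ∀ x, HasFDerivAt E (dE x) x := by
    intro x
    have a1 : HasFDerivAt (fun w => A w w) ((A x).comp (ContinuousLinearMap.id ℝ Z) + A.flip x) x :=
      A.hasFDerivAt.clm_apply (hasFDerivAt_id x)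
    have a2 := (a1.const_mul (1 / 2 : ℝ)).add (hF1 x)
    refine a2.congr_fderiv ?_
    ext v
    simp [hdE, hΦa, hAsym v x]
    ring
  have h2 : ∀ x, HasFDerivAt dE (d2E x) x := fun x =>
    A.hasFDerivAt.add (Φ.hasFDerivAt.comp x (hF2 x))
  have hκ' : ∀ x v, κ * ‖v‖ ^ 2 ≤ d2E x v v := by
    intro x v
    simpa [hd2E, hΦa] using hκ x v
  have hρ : ∀ (c : ℝ) v, 0 ≤ c → ρ (c • v) = c * ρ v := by
    intro c v hc; simp only [hρdef, map_smul]; exact hRh c _ hc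
  have hRz : R 0 = 0 := by simpa using hRh 0 0 le_rfl
  have hRsub : ∀ u v, R (u + v) ≤ R u + R v := by
    intro u v
    have h := hRc.2 (Set.mem_univ u) (Set.mem_univ v)
      (show (0 : ℝ) ≤ 1 / 2 by norm_num) (show (0 : ℝ) ≤ 1 / 2 by norm_num) (by norm_num)
    rw [← smul_add, hRh _ _ (by norm_num)] at h
    simp only [smul_eq_mul] at h
    linarith
  have hfL : ∀ s ∈ Set.Icc 0 T, ∀ u ∈ Set.Icc 0 T, ‖f s - f u‖ ≤ L * |s - u| := by
    intro s hs u hu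
    have h := hℓ.dist_le_mul s hs u hu
    rw [dist_eq_norm, Real.dist_eq, Real.coe_toNNReal _ hL0] at h
    simp only [hf]
    rw [← map_sub]
    exact (hΦn _).trans h
  have hsub0 : ∀ s w, LocStable R A DF ℓ ι s w → ∀ v, 0 ≤ dE w v - f s v + ρ v := by
    rintro s w ⟨ξ, hξ, hξ'⟩ v
    have a1 := hξ (ι v)
    have a2 := DFunLike.congr_fun hξ' v
    simp only [_root_.add_apply, ContinuousLinearMap.comp_apply, hDI, _root_.zero_apply] at a2
    simp only [hRz, sub_zero, zero_add] at a1
    simp only [hρdef]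
    linarith
  -- the solution
  have hyd : ∀ᵐ s : ℝ, s ∈ Set.Ioo 0 T → HasDerivAt y (y' s) s ∧
      (∀ v, 0 ≤ dE (y s) v - f s v + ρ v) ∧ ρ (y' s) + dE (y s) (y' s) - f s (y' s) ≤ 0 := by
    rw [ae_restrict_iff' measurableSet_Ioo] at hyae
    filter_upwards [hyae, hy'i.ae_hasDerivAt_integral] with s hs1 hs2 hs
    have hsI : s ∈ Set.Icc 0 T := Set.Ioo_subset_Icc_self hs
    refine ⟨?_, ?_⟩
    · have hd := (hs2 (by rwa [Set.uIcc_of_le hT.le]) 0 (by simp)).const_add z₀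
      refine hd.congr_of_eventuallyEq ?_
      filter_upwards [Icc_mem_nhds hs.1 hs.2] with u hu using hyint u hu
    · obtain ⟨ξ, hξ, hξ'⟩ := hs1 hs
      have a2 : ∀ v, ξ (ι v) + (dE (y s) v - f s v) = 0 := by
        intro v
        have := DFunLike.congr_fun hξ' v
        simpa only [_root_.add_apply, ContinuousLinearMap.comp_apply, hDI,
          _root_.zero_apply] using this
      constructor
      · intro v
        have b1 := hξ (ι (y' s) + ι v)
        have b2 := hRsub (ι (y' s)) (ι v)
        rw [add_sub_cancel_left] at b1
        have := a2 v
        simp only [hρdef]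
        linarith
      · have b1 := hξ 0
        rw [hRz, zero_sub, map_neg] at b1
        have := a2 (y' s)
        simp only [hρdef]
        linarith
  -- constants
  set c1 : ℝ := 2 * L / κ with hc1
  have hc10 : 0 ≤ c1 := by positivity
  set r : ℝ := ‖y 0‖ + c1 * T + Ly * T + 1 with hr
  have hr0 : 0 < r := by positivity
  have hyr : ∀ s ∈ Set.Icc 0 T, ‖y s‖ ≤ r := by
    intro s hs
    have h := hyLip.dist_le_mul s hs 0 ⟨le_rfl, hT.le⟩
    rw [dist_eq_norm, Real.dist_eq, sub_zero, abs_of_nonneg hs.1] at h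
    have h' : ‖y s‖ ≤ ‖y 0‖ + ‖y s - y 0‖ := by
      simpa using norm_add_le (y 0) (y s - y 0)
    have h3 : (Ly : ℝ) * s ≤ Ly * T := mul_le_mul_of_nonneg_left hs.2 Ly.2
    have h4 : 0 ≤ c1 * T := by positivity
    linarith
  obtain ⟨Cr, hCr0, hCr⟩ := hC21 r hr0
  set M : ℝ := ‖A‖ + CF * (1 + r ^ q) with hMdef
  have hM0 : 0 ≤ M := by positivity
  have hM : ∀ u, ‖u‖ ≤ r → ‖d2E u‖ ≤ M := by
    intro u hu
    refine (norm_add_le A (Φ.comp (D2F u))).trans ?_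
    rw [hMdef]
    gcongr
    refine ContinuousLinearMap.opNorm_le_bound _ (by positivity) fun v => ?_
    rw [ContinuousLinearMap.comp_apply]
    refine (hΦn _).trans ((hD2F u v).trans ?_)
    gcongr
  set M1 : ℝ := ‖dE 0‖ + M * r with hM1def
  have hM10 : 0 ≤ M1 := by positivity
  have hM1 : ∀ u, ‖u‖ ≤ r → ‖dE u‖ ≤ M1 := by
    intro u hu
    have h := aux_lip dE d2E h2 r M hM 0 u (by simpa using hr0.le) hu
    rw [sub_zero] at h
    have h' : ‖dE u‖ ≤ ‖dE 0‖ + ‖dE u - dE 0‖ := by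
      simpa using norm_add_le (dE 0) (dE u - dE 0)
    have : M * ‖u‖ ≤ M * r := by gcongr
    linarith
  have hCr' : ∀ u v, ‖u‖ ≤ r → ‖v‖ ≤ r → ‖d2E u - d2E v‖ ≤ Cr * ‖u - v‖ := by
    intro u v hu hv
    refine aux_polar _ ?_ _ (by positivity) ?_
    · intro w w'
      simp only [_root_.sub_apply]
      rw [second_derivative_symmetric h1 (h2 u) w w', second_derivative_symmetric h1 (h2 v) w w']
    · intro w
      have e : (d2E u - d2E v) w w = D2F u w (ι w) - D2F v w (ι w) := by
        simp [hd2E, hΦa]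
      rw [e, abs_le]
      have a1 := hCr u v w hu hv
      have a2 := hCr v u w hv hu
      rw [norm_sub_rev] at a2
      constructor <;> linarith
  set c3 : ℝ := M * c1 ^ 2 + (M * c1 + L) * c1 + (M * c1 + L) * Ly with hc3
  set C0 : ℝ := Real.sqrt (2 / κ * Real.exp (2 * Cr * Ly / κ * T) * c3 * T) with hC0
  have hC00 : 0 ≤ C0 := Real.sqrt_nonneg _
  refine ⟨C0 + Ly * Real.sqrt T + 1, by positivity, ?_⟩
  intro τ hτ
  obtain ⟨ht0, hzz, hsch⟩ := hscheme τ hτ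
  obtain ⟨hNT, hNlt⟩ := hN τ hτ
  obtain ⟨hNN, hN1, hNst⟩ := hNhat τ hτ
  have hK0 := hK0 τ hτ
  have hKlast := hKlast τ hτ
  have hKmono := hKmono τ hτ
  have hKmem := hKmem τ hτ
  have hKsurj := hKsurj τ hτ
  -- times
  have htT : ∀ k, t τ k ≤ T := by
    intro k
    cases k with
    | zero => rw [ht0]; exact hT.le
    | succ k => rw [(hsch k).2.2]; exact min_le_right _ _
  have htstep : ∀ k, t τ k ≤ t τ (k + 1) := by
    intro k
    rw [(hsch k).2.2]
    exact le_min (by linarith [(hsch k).1]) (htT k)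
  have htmono : Monotone (t τ) := monotone_nat_of_le_succ htstep
  have ht0' : ∀ k, 0 ≤ t τ k := fun k => ht0 ▸ htmono (Nat.zero_le k)
  have htN : ∀ k, N τ ≤ k → t τ k = T := fun k hk => le_antisymm (htT k) (hNT ▸ htmono hk)
  -- between consecutive members of the index set the time does not change
  have hgap : ∀ j, j + 1 ≤ n τ → K τ j < K τ (j + 1) := fun j hj =>
    hKmono (Set.mem_Iic.2 (by omega)) (Set.mem_Iic.2 hj) (Nat.lt_succ_self j)
  have hconst : ∀ j, j + 1 ≤ n τ → ∀ k, K τ j ≤ k → k < K τ (j + 1) → t τ k = t τ (K τ j) := by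
    intro j hj k hk
    induction k, hk using Nat.le_induction with
    | base => intro _; rfl
    | succ k hk ih =>
      intro hlt
      rw [← ih (by omega)]
      by_contra hne
      have hlt' : t τ k < t τ (k + 1) := lt_of_le_of_ne (htstep k) (Ne.symm hne)
      have hkN : k + 1 ≤ N τ := by
        by_contra hcon
        have := htN k (by omega)
        linarith [htT (k + 1)]
      obtain ⟨i, hi, hKi⟩ := hKsurj (k + 1) (Or.inr (Or.inr ⟨by omega, hkN, by simpa using hlt'⟩))
      have g1 : j < i := by
        by_contra hcon
        have := hKmono.monotoneOn (Set.mem_Iic.2 hi) (Set.mem_Iic.2 (show j ≤ n τ by omega))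
          (not_lt.1 hcon)
        omega
      have g2 := hKmono.monotoneOn (Set.mem_Iic.2 hj) (Set.mem_Iic.2 hi) (Nat.succ_le_of_lt g1)
      omega
  have hprev : ∀ j, j + 1 ≤ n τ → t τ (K τ (j + 1) - 1) = t τ (K τ j) := by
    intro j hj
    have := hgap j hj
    exact hconst j hj _ (by omega) (by omega)
  -- stability
  have hstab : ∀ j, j + 1 ≤ n τ → ∀ v, 0 ≤ dE (z τ (K τ (j + 1))) v - f (t τ (K τ j)) v + ρ v := by
    intro j hj
    have hg := hgap j hj
    rcases hKmem (j + 1) hj with h | h | ⟨hk1, hkN, hlt⟩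
    · omega
    · have := hsub0 _ _ hNst
      rw [← h, hprev j hj] at this
      exact this
    · intro v
      rw [← hprev j hj]
      obtain ⟨k, hk⟩ : ∃ k, K τ (j + 1) = k + 1 := ⟨K τ (j + 1) - 1, by omega⟩
      rw [hk, Nat.add_sub_cancel] at hlt
      rw [hk, Nat.add_sub_cancel]
      obtain ⟨s1, s2, s3⟩ := hsch k
      have hstrict : ‖ι (z τ (k + 1) - z τ k)‖ < τ := by
        have : t τ (k + 1) ≤ t τ k + τ - ‖ι (z τ (k + 1) - z τ k)‖ := s3 ▸ min_le_left _ _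
        linarith
      refine aux_min_stable E dE h1 (f (t τ k)) (z τ (k + 1)) v (ρ v)
        ((τ - ‖ι (z τ (k + 1) - z τ k)‖) / (‖ι v‖ + 1))
        (div_pos (by linarith) (by positivity)) ?_
      intro ε hε0 hε1
      rw [lt_div_iff₀ (by positivity)] at hε1
      have hsplit : ι (z τ (k + 1) + ε • v - z τ k) = ι (z τ (k + 1) - z τ k) + ε • ι v := by
        rw [← map_smul, ← map_add]; congr 1; abel
      have hmin := s2 (z τ (k + 1) + ε • v) (by
        rw [hsplit]
        refine (norm_add_le _ _).trans ?_
        rw [norm_smul, Real.norm_eq_abs, abs_of_pos hε0]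
        nlinarith)
      rw [hEn, hEn, hsplit] at hmin
      have hs := hRsub (ι (z τ (k + 1) - z τ k)) (ε • ι v)
      rw [hRh _ _ hε0.le] at hs
      simp only [hρdef]
      linarith
  -- energy inequality
  have hener : ∀ j, j + 1 ≤ n τ →
      ρ (z τ (K τ (j + 1)) - z τ (K τ j)) +
        (E (z τ (K τ (j + 1))) - f (t τ (K τ j)) (z τ (K τ (j + 1)))) ≤
      E (z τ (K τ j)) - f (t τ (K τ j)) (z τ (K τ j)) := by
    intro j hj
    have hall : ∀ k, K τ j ≤ k → k ≤ K τ (j + 1) →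
        ρ (z τ k - z τ (K τ j)) + (E (z τ k) - f (t τ (K τ j)) (z τ k)) ≤
        E (z τ (K τ j)) - f (t τ (K τ j)) (z τ (K τ j)) := by
      intro k hk
      induction k, hk using Nat.le_induction with
      | base => intro _; simp [hρdef, hRz]
      | succ k hk ih =>
        intro hle
        have i1 := ih (by omega)
        have i2 := (hsch k).2.1 (z τ k) (by simpa using hτ.le)
        rw [hEn, hEn, hconst j hj k hk (by omega), sub_self, map_zero, hRz] at i2
        have i3 := hRsub (ι (z τ (k + 1) - z τ k)) (ι (z τ k - z τ (K τ j)))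
        rw [← map_add, sub_add_sub_cancel] at i3
        simp only [hρdef] at i1 ⊢
        linarith
    exact hall _ (hgap j hj).le le_rfl
  have hn1 : 1 ≤ n τ := by
    by_contra hcon
    have : n τ = 0 := by omega
    rw [this] at hKlast
    omega
  have hslt : ∀ j, j + 2 ≤ n τ → t τ (K τ j) < t τ (K τ (j + 1)) := by
    intro j hj
    have g1 := hgap j (by omega)
    have g2 : K τ (j + 1) < K τ (n τ) :=
      hKmono (Set.mem_Iic.2 (by omega)) (Set.mem_Iic.2 le_rfl) (by omega)
    rcases hKmem (j + 1) (by omega) with h | h | ⟨hk1, hkN, hlt⟩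
    · omega
    · omega
    · rwa [hprev j (by omega)] at hlt
  have hsτ : ∀ j, j + 1 ≤ n τ → t τ (K τ (j + 1)) - t τ (K τ j) ≤ τ := by
    intro j hj
    rw [← hprev j hj]
    have hg := hgap j hj
    obtain ⟨k, hk⟩ : ∃ k, K τ (j + 1) = k + 1 := ⟨K τ (j + 1) - 1, by omega⟩
    rw [hk, Nat.add_sub_cancel]
    have : t τ (k + 1) ≤ t τ k + τ - ‖ι (z τ (k + 1) - z τ k)‖ :=
      (hsch k).2.2 ▸ min_le_left _ _
    linarith [norm_nonneg (ι (z τ (k + 1) - z τ k))]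
  have hchain := aux_chain E dE d2E h1 h2 κ hκ0 hκ' ρ hρ f L T r M M1 Cr Ly hT hM0 hM10 hCr0 hL0
    hr0.le hfL hM1 hM hCr' y y' hyLip hyr hyd c1 c3 hc1 hc3
    (by rw [hr]; have : 0 ≤ (Ly : ℝ) * T := by positivity
        linarith)
    τ hτ (n τ) (fun j => t τ (K τ j)) (fun j => z τ (K τ j))
    (by simp only [hK0, ht0]) (by simp only [hK0, hzz, hy0])
    (fun j => ⟨ht0' _, htT _⟩) hslt hsτ
    (by simp only [hK0, hzz, ht0]; exact hsub0 _ _ hz₀) hstab hener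
  obtain ⟨hA, hB⟩ := hchain
  have hτ0 : 0 ≤ Real.sqrt τ := Real.sqrt_nonneg _
  have hbig : C0 * Real.sqrt τ ≤ (C0 + Ly * Real.sqrt T + 1) * Real.sqrt τ := by
    gcongr
    have : 0 ≤ (Ly : ℝ) * Real.sqrt T := by positivity
    linarith
  constructor
  · intro j hj1 hjn s hs
    obtain ⟨i, rfl⟩ : ∃ i, j = i + 1 := ⟨j - 1, by omega⟩
    rw [Nat.add_sub_cancel] at hs ⊢
    exact (hA i hjn s (Set.Ico_subset_Icc_self hs)).trans hbig
  · obtain ⟨m, hm⟩ : ∃ m, n τ = m + 1 := ⟨n τ - 1, by omega⟩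
    have b1 := hB m (by omega)
    have hKm : K τ (m + 1) = Nhat τ := by rw [← hm]; exact hKlast
    simp only [hKm] at b1
    have b2 := hsτ m (by omega)
    rw [hKm, htN _ hNN] at b2
    set a := t τ (K τ m) with ha
    have ha0 : 0 ≤ a := ht0' _
    have haT : a ≤ T := htT _
    have b3 := hyLip.dist_le_mul T ⟨hT.le, le_rfl⟩ a ⟨ha0, haT⟩
    rw [dist_eq_norm, Real.dist_eq, abs_of_nonneg (by linarith)] at b3
    have b4 : T - a ≤ Real.sqrt T * Real.sqrt τ := by
      rw [← Real.sqrt_mul hT.le]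
      apply Real.le_sqrt_of_sq_le
      nlinarith
    have b5 : (Ly : ℝ) * (T - a) ≤ Ly * (Real.sqrt T * Real.sqrt τ) := by gcongr
    have b6 : ‖y T - z τ (Nhat τ)‖ ≤ ‖y T - y a‖ + ‖y a - z τ (Nhat τ)‖ :=
      norm_sub_le_norm_sub_add_norm_sub _ _ _
    nlinarith

end RIS
end
end

section
/- Let z ∈ C^{0,1}([0,T];Z) be a differential solution of the rate-independent system, let I be locally κ-uniformly convex around z with radius Δ > 0, assume ℓ ∈ W^{1,∞}([0,T];V) with |ℓ|_Lip ≤ κ − δ for some δ ∈ (0,κ] and ℓ′ ∈ BV([0,T];V), and assume I(t,·) ∈ C^{2,1}_loc(Z;ℝ). Then there exist a constant K_loc > 0 and a threshold τ̄ > 0, both independent of τ, such that for every step size τ ≤ τ̄ the back-transformed discrete parameterized solution z_τ of the local incremental minimization scheme satisfies ‖z_τ(t) − z(t)‖_Z ≤ K_loc τ for all t ∈ [0,T]. -/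
open MeasureTheory
open scoped RealInnerProductSpace NNReal

noncomputable section

namespace RIS

variable {Z V X : Type*}
  [NormedAddCommGroup Z] [InnerProductSpace ℝ Z] [CompleteSpace Z]
  [NormedAddCommGroup V] [InnerProductSpace ℝ V] [CompleteSpace V]
  [NormedAddCommGroup X] [NormedSpace ℝ X]

/-- An absolutely continuous function with a.e. derivative at most `B` grows at most linearly. -/
lemma ac_sub_le {f : ℝ → ℝ} {a c B : ℝ} (hac : a ≤ c)
    (hf : AbsolutelyContinuousOnInterval f a c)
    (hd : ∀ᵐ x : ℝ, x ∈ Set.Ioo a c → ∃ f', HasDerivAt f f' x ∧ f' ≤ B) :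
    f c - f a ≤ B * (c - a) := by
  rw [← hf.integral_deriv_eq_sub]
  have h1 : ∫ x in a..c, deriv f x ≤ ∫ x in a..c, B := by
    refine intervalIntegral.integral_mono_ae_restrict hac hf.intervalIntegrable_deriv
      intervalIntegrable_const ?_
    have h2 : ∀ᵐ x : ℝ, x ≠ a := by simp [ae_iff, measure_singleton]
    have h3 : ∀ᵐ x : ℝ, x ≠ c := by simp [ae_iff, measure_singleton]
    refine (ae_restrict_iff' measurableSet_Icc).2 ?_
    filter_upwards [hd, h2, h3] with x hx hxa hxc hxI
    obtain ⟨f', hf', hle⟩ := hx ⟨lt_of_le_of_ne hxI.1 (Ne.symm hxa), lt_of_le_of_ne hxI.2 hxc⟩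
    rw [hf'.deriv]; exact hle
  refine h1.trans (le_of_eq ?_)
  simp [mul_comm]

lemma taylor_le {E F' : Type*} [NormedAddCommGroup E] [NormedSpace ℝ E]
    [NormedAddCommGroup F'] [NormedSpace ℝ F']
    {G : E → F'} {H : E → E →L[ℝ] F'} (hG : ∀ x, HasFDerivAt G (H x) x)
    {r C : ℝ} (hC : 0 ≤ C) (hH : ∀ x w, ‖x‖ ≤ r → ‖w‖ ≤ r → ‖H x - H w‖ ≤ C * ‖x - w‖)
    {x w : E} (hx : ‖x‖ ≤ r) (hw : ‖w‖ ≤ r) :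
    ‖G x - G w - H w (x - w)‖ ≤ C * ‖x - w‖ ^ 2 := by
  have hseg : ∀ m ∈ segment ℝ w x, ‖m‖ ≤ r := by
    intro m hm
    have := (convex_closedBall (0 : E) r).segment_subset (by simpa using hw) (by simpa using hx) hm
    simpa using this
  have h := (convex_segment (𝕜 := ℝ) w x).norm_image_sub_le_of_norm_hasFDerivWithin_le'
    (f := G) (f' := H) (φ := H w) (C := C * ‖x - w‖) (x := w) (y := x)
    (fun m _ => (hG m).hasFDerivWithinAt) ?_ (left_mem_segment ℝ w x) (right_mem_segment ℝ w x)
  · calc _ ≤ _ := h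
      _ = _ := by ring
  · intro m hm
    refine (hH m w (hseg m hm) hw).trans ?_
    refine mul_le_mul_of_nonneg_left ?_ hC
    obtain ⟨θ, hθ, rfl⟩ := (segment_eq_image' ℝ w x) ▸ hm
    simp only [add_sub_cancel_left, norm_smul, Real.norm_eq_abs, abs_of_nonneg hθ.1]
    exact mul_le_of_le_one_left (norm_nonneg _) hθ.2

lemma lip_le {E F' : Type*} [NormedAddCommGroup E] [NormedSpace ℝ E]
    [NormedAddCommGroup F'] [NormedSpace ℝ F']
    {G : E → F'} {H : E → E →L[ℝ] F'} (hG : ∀ x, HasFDerivAt G (H x) x)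
    {r M : ℝ} (hM : ∀ x, ‖x‖ ≤ r → ‖H x‖ ≤ M)
    {x w : E} (hx : ‖x‖ ≤ r) (hw : ‖w‖ ≤ r) :
    ‖G x - G w‖ ≤ M * ‖x - w‖ := by
  refine (convex_closedBall (0 : E) r).norm_image_sub_le_of_norm_hasFDerivWithin_le
    (f := G) (f' := H) (fun m _ => (hG m).hasFDerivWithinAt) ?_ (by simpa using hw)
    (by simpa using hx)
  intro m hm
  exact hM m (by simpa using hm)

lemma interp_le {E F' : Type*} [NormedAddCommGroup E] [NormedSpace ℝ E]
    [NormedAddCommGroup F'] [NormedSpace ℝ F']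
    {G : E → F'} {H : E → E →L[ℝ] F'} (hG : ∀ x, HasFDerivAt G (H x) x)
    {r C : ℝ} (hC : 0 ≤ C) (hH : ∀ x w, ‖x‖ ≤ r → ‖w‖ ≤ r → ‖H x - H w‖ ≤ C * ‖x - w‖)
    {u d : E} {θ : ℝ} (h0 : 0 ≤ θ) (h1 : θ ≤ 1) (hu : ‖u‖ ≤ r) (hud : ‖u + d‖ ≤ r) :
    ‖G (u + θ • d) - ((1 - θ) • G u + θ • G (u + d))‖ ≤ 2 * C * ‖d‖ ^ 2 := by
  have hm : ‖u + θ • d‖ ≤ r := by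
    have : u + θ • d = (1 - θ) • u + θ • (u + d) := by module
    rw [this]
    have := (convex_closedBall (0 : E) r) (x := u) (by simpa using hu) (y := u + d)
      (by simpa using hud) (sub_nonneg.2 h1) h0 (by ring)
    simpa using this
  have e1 := taylor_le hG hC hH hm hu
  have e2 := taylor_le hG hC hH hud hu
  simp only [add_sub_cancel_left, map_smul, norm_smul, Real.norm_eq_abs, abs_of_nonneg h0] at e1 e2
  have : G (u + θ • d) - ((1 - θ) • G u + θ • G (u + d))
      = (G (u + θ • d) - G u - θ • (H u) d) - θ • (G (u + d) - G u - (H u) d) := by module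
  rw [this]
  refine (norm_sub_le _ _).trans ?_
  rw [norm_smul, Real.norm_eq_abs, abs_of_nonneg h0]
  have hn : 0 ≤ C * ‖d‖ ^ 2 := by positivity
  have h3 : C * (θ * ‖d‖) ^ 2 ≤ C * ‖d‖ ^ 2 := by
    have : θ ^ 2 ≤ 1 := by nlinarith
    nlinarith
  have h4 : θ * ‖G (u + d) - G u - (H u) d‖ ≤ C * ‖d‖ ^ 2 :=
    (mul_le_of_le_one_left (norm_nonneg _) h1).trans e2
  linarith

lemma mono_of_conv {E : Type*} [NormedAddCommGroup E] [NormedSpace ℝ E]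
    {G : E → E →L[ℝ] ℝ} {H : E → E →L[ℝ] E →L[ℝ] ℝ} (hG : ∀ x, HasFDerivAt G (H x) x)
    {κ : ℝ} {x w : E} (hc : ∀ θ ∈ Set.Icc (0 : ℝ) 1, ∀ v, κ * ‖v‖ ^ 2 ≤ H (w + θ • (x - w)) v v) :
    κ * ‖x - w‖ ^ 2 ≤ (G x - G w) (x - w) := by
  set d := x - w with hd
  have hder : ∀ θ : ℝ, HasDerivAt (fun θ : ℝ => G (w + θ • d) d) (H (w + θ • d) d d) θ := by
    intro θ
    have h1 : HasDerivAt (fun θ : ℝ => w + θ • d) d θ := by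
      simpa using ((hasDerivAt_id θ).smul_const d).const_add w
    have h2 := (hG (w + θ • d)).comp_hasDerivAt θ h1
    exact (ContinuousLinearMap.apply ℝ ℝ d).hasFDerivAt.comp_hasDerivAt θ h2
  obtain ⟨θ, hθ, h⟩ := exists_hasDerivAt_eq_slope (fun θ : ℝ => G (w + θ • d) d)
    (fun θ => H (w + θ • d) d d) (zero_lt_one)
    (fun θ _ => (hder θ).continuousAt.continuousWithinAt) (fun θ _ => hder θ)
  have h3 := hc θ ⟨hθ.1.le, hθ.2.le⟩ d
  rw [h] at h3
  simpa [hd] using h3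

lemma b_taylor {F' : Type*} [NormedAddCommGroup F'] [NormedSpace ℝ F'] {b b' : ℝ → F'}
    {a c ω : ℝ} (hb : ∀ x ∈ Set.Icc a c, HasDerivAt b (b' x) x) {q : F'}
    (hω : ∀ x ∈ Set.Icc a c, ‖b' x - q‖ ≤ ω) {x : ℝ} (hx : x ∈ Set.Icc a c) :
    ‖b x - b a - (x - a) • q‖ ≤ ω * (x - a) := by
  have h := norm_image_sub_le_of_norm_deriv_le_segment' (f := fun s => b s - s • q)
    (f' := fun s => b' s - q) (a := a) (b := c) (C := ω) ?_ ?_ x hx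
  · convert h using 2; module
  · intro s hs
    have := (hb s hs).sub ((hasDerivAt_id s).smul_const q)
    simp only [one_smul] at this
    exact this.hasDerivWithinAt
  · intro s hs; exact hω s ⟨hs.1, hs.2.le⟩


lemma step_gamma {E : Type*} [NormedAddCommGroup E] [NormedSpace ℝ E]
    {G : E → E →L[ℝ] ℝ} {H : E → E →L[ℝ] E →L[ℝ] ℝ} (hG : ∀ x, HasFDerivAt G (H x) x)
    (hsymm : ∀ x v w, H x v w = H x w v)
    {r C M Δ κ Ly : ℝ} (hC : 0 ≤ C) (hM0 : 0 ≤ M) (hκ : 0 < κ) (hLy : 0 ≤ Ly)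
    (hH : ∀ x w, ‖x‖ ≤ r → ‖w‖ ≤ r → ‖H x - H w‖ ≤ C * ‖x - w‖)
    (hM : ∀ x, ‖x‖ ≤ r → ‖H x‖ ≤ M)
    {b b' : ℝ → E →L[ℝ] ℝ} {ρ : E → ℝ} {a c : ℝ} (ha : 0 ≤ a) (hac : a < c)
    {u0 u1 v : E} (hu : u1 = u0 + (c - a) • v) (hv : ‖v‖ ≤ 1)
    (S0 : ∀ w, -(G u0 - b a) w ≤ ρ w) (S1 : ∀ w, -(G u1 - b c) w ≤ ρ w)
    (D1 : (G u1 - b c) v = - ρ v)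
    (hb : ∀ x ∈ Set.Icc a c, HasDerivAt b (b' x) x) {ω : ℝ}
    (hω : ∀ x ∈ Set.Icc a c, ‖b' x - b' a‖ ≤ ω)
    {y y' : ℝ → E}
    (hyL : ∀ s ∈ Set.Icc a c, ∀ t ∈ Set.Icc a c, ‖y s - y t‖ ≤ Ly * |s - t|)
    (hy : ∀ᵐ t : ℝ, t ∈ Set.Ioo a c → HasDerivAt y (y' t) t ∧ ‖y' t‖ ≤ Ly ∧
      (∀ w, -(G (y t) - b t) w ≤ ρ w) ∧ (G (y t) - b t) (y' t) = - ρ (y' t))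
    (hp : ∀ t ∈ Set.Icc a c, ‖u0 + (t - a) • v - y t‖ ≤ Δ)
    (hr : ∀ t ∈ Set.Icc a c, ∀ x, ‖x - y t‖ ≤ Δ → ‖x‖ ≤ r)
    (hconv : ∀ t ∈ Set.Icc a c, ∀ x, ‖x - y t‖ ≤ Δ → ∀ v, κ * ‖v‖ ^ 2 ≤ H x v v) :
    Real.exp (-(C * (1 + Ly) / κ) * c) * (G u1 - G (y c)) (u1 - y c) ≤
      Real.exp (-(C * (1 + Ly) / κ) * a) * (G u0 - G (y a)) (u0 - y a) +
      2 * (((G u0 - b a) - (G u1 - b c)) v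
        + (2 * C * (c - a) ^ 2 + 2 * ω * (c - a)) * (1 + Ly)) * (c - a) := by
  have hca : 0 < c - a := sub_pos.2 hac
  have hω0 : 0 ≤ ω := (norm_nonneg _).trans (hω a ⟨le_rfl, hac.le⟩)
  set Λ : ℝ := C * (1 + Ly) / κ with hΛ
  set p : ℝ → E := fun t => u0 + (t - a) • v with hpdef
  set γ : ℝ → ℝ := fun t => (G (p t) - G (y t)) (p t - y t) with hγdef
  set ε : ℝ := 2 * C * (c - a) ^ 2 + 2 * ω * (c - a) with hε
  set Q : ℝ := ((G u0 - b a) - (G u1 - b c)) v with hQ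
  have hε0 : 0 ≤ ε := by positivity
  have hQ0 : 0 ≤ Q := by
    have := S0 v
    have h2 : Q = (G u0 - b a) v - (G u1 - b c) v := by rw [hQ, sub_apply]
    rw [h2, D1]
    linarith
  have hΔ0 : 0 ≤ Δ := (norm_nonneg _).trans (hp a ⟨le_rfl, hac.le⟩)
  have hpr : ∀ t ∈ Set.Icc a c, ‖p t‖ ≤ r := fun t ht => hr t ht _ (hp t ht)
  have hyr : ∀ t ∈ Set.Icc a c, ‖y t‖ ≤ r := fun t ht => hr t ht _ (by simpa using hΔ0)
  have hmono : ∀ t ∈ Set.Icc a c, κ * ‖p t - y t‖ ^ 2 ≤ γ t := by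
    intro t ht
    refine mono_of_conv hG ?_
    intro θ hθ w
    refine hconv t ht _ ?_ w
    rw [add_sub_cancel_left, norm_smul, Real.norm_eq_abs, abs_of_nonneg hθ.1]
    exact (mul_le_of_le_one_left (norm_nonneg _) hθ.2).trans (hp t ht)
  have hpa : p a = u0 := by simp [hpdef]
  have hpc : p c = u1 := by simp [hpdef, hu]
  have hu0 : ‖u0‖ ≤ r := hpa ▸ hpr a ⟨le_rfl, hac.le⟩
  have hu1 : ‖u1‖ ≤ r := hpc ▸ hpr c ⟨hac.le, le_rfl⟩
  -- Lipschitz bound of γ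
  have hγL : ∀ s ∈ Set.Icc a c, ∀ t ∈ Set.Icc a c, |γ s - γ t| ≤ (2 * M * (1 + Ly) * Δ) * |s - t| := by
    intro s hs t ht
    have hpl : ‖p s - p t‖ ≤ |s - t| := by
      have : p s - p t = (s - t) • v := by simp only [hpdef]; module
      rw [this, norm_smul, Real.norm_eq_abs]
      exact mul_le_of_le_one_right (abs_nonneg _) hv
    have hyl := hyL s hs t ht
    have e1 := (lip_le hG hM (hpr s hs) (hpr t ht)).trans (mul_le_mul_of_nonneg_left hpl hM0)
    have e2 := (lip_le hG hM (hyr s hs) (hyr t ht)).trans (mul_le_mul_of_nonneg_left hyl hM0)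
    have e3 := (lip_le hG hM (hpr t ht) (hyr t ht)).trans
      (mul_le_mul_of_nonneg_left (hp t ht) hM0)
    have hsplit : γ s - γ t = ((G (p s) - G (p t)) - (G (y s) - G (y t))) (p s - y s)
        + (G (p t) - G (y t)) ((p s - p t) - (y s - y t)) := by
      simp only [hγdef, sub_apply, map_sub]; ring
    rw [hsplit]
    have f1 : ‖((G (p s) - G (p t)) - (G (y s) - G (y t))) (p s - y s)‖
        ≤ (M * |s - t| + M * (Ly * |s - t|)) * Δ := by
      refine (ContinuousLinearMap.le_opNorm _ _).trans ?_
      refine mul_le_mul ((norm_sub_le _ _).trans (add_le_add e1 e2)) (hp s hs) (norm_nonneg _) ?_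
      positivity
    have f2 : ‖(G (p t) - G (y t)) ((p s - p t) - (y s - y t))‖
        ≤ (M * Δ) * (|s - t| + Ly * |s - t|) := by
      refine (ContinuousLinearMap.le_opNorm _ _).trans ?_
      refine mul_le_mul e3 ((norm_sub_le _ _).trans (add_le_add hpl hyl)) (norm_nonneg _) ?_
      positivity
    rw [Real.norm_eq_abs] at f1 f2
    refine (abs_add_le _ _).trans ((add_le_add f1 f2).trans (le_of_eq ?_))
    ring
  have hγAC : AbsolutelyContinuousOnInterval γ a c := by
    refine LipschitzOnWith.absolutelyContinuousOnInterval
      (K := Real.toNNReal (2 * M * (1 + Ly) * Δ)) ?_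
    rw [Set.uIcc_of_le hac.le]
    refine LipschitzOnWith.of_dist_le_mul ?_
    intro s hs t ht
    rw [Real.dist_eq, Real.dist_eq, Real.coe_toNNReal _ (by positivity)]
    exact hγL s hs t ht
  have hexpAC : AbsolutelyContinuousOnInterval (fun t => Real.exp (-Λ * t)) a c := by
    have : ContDiffOn ℝ 1 (fun t => Real.exp (-Λ * t)) (Set.uIcc a c) := by fun_prop
    exact this.absolutelyContinuousOnInterval
  have key := ac_sub_le (B := 2 * (Q + ε * (1 + Ly))) hac.le (hexpAC.fun_mul hγAC) ?_
  · have k2 : γ a = (G u0 - G (y a)) (u0 - y a) := by simp only [hγdef, hpa]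
    have k3 : γ c = (G u1 - G (y c)) (u1 - y c) := by simp only [hγdef, hpc]
    rw [k2, k3] at key
    linarith
  filter_upwards [hy] with t ht htI
  obtain ⟨hyd, hyn, hst, heq⟩ := ht htI
  have htc : t ∈ Set.Icc a c := ⟨htI.1.le, htI.2.le⟩
  have hpd : HasDerivAt p v t := by
    simpa [hpdef] using (((hasDerivAt_id t).sub_const a).smul_const v).const_add u0
  have hPd := ((hG (p t)).comp_hasDerivAt t hpd).sub ((hG (y t)).comp_hasDerivAt t hyd)
  have hγd := hPd.clm_apply (hpd.sub hyd)
  have hed : HasDerivAt (fun t => Real.exp (-Λ * t)) (Real.exp (-Λ * t) * (-Λ)) t := by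
    simpa using ((hasDerivAt_id t).const_mul (-Λ)).exp
  refine ⟨_, hed.mul hγd, ?_⟩
  simp only [Function.comp_apply, Pi.sub_apply]
  change Real.exp (-Λ * t) * -Λ * γ t + Real.exp (-Λ * t) *
    (((H (p t)) v - (H (y t)) (y' t)) (p t - y t) + (G (p t) - G (y t)) (v - y' t)) ≤ _
  have hexp0 := Real.exp_pos (-Λ * t)
  have hΛ0 : 0 ≤ Λ := by positivity
  have hexp1 : Real.exp (-Λ * t) ≤ 1 := by
    rw [Real.exp_le_one_iff]
    have : 0 ≤ t := ha.trans htI.1.le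
    nlinarith
  -- main estimate
  suffices hmain : ((H (p t)) v - (H (y t)) (y' t)) (p t - y t) + (G (p t) - G (y t)) (v - y' t)
      ≤ 2 * (Q + ε * (1 + Ly)) + Λ * γ t by
    have hB : 0 ≤ 2 * (Q + ε * (1 + Ly)) := by positivity
    calc _ = Real.exp (-Λ * t) * ((((H (p t)) v - (H (y t)) (y' t)) (p t - y t)
            + (G (p t) - G (y t)) (v - y' t)) - Λ * γ t) := by ring
      _ ≤ Real.exp (-Λ * t) * (2 * (Q + ε * (1 + Ly))) :=
          mul_le_mul_of_nonneg_left (by linarith) hexp0.le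
      _ ≤ _ := mul_le_of_le_one_left hB hexp1
  -- Taylor terms
  have hLγ : C * ‖p t - y t‖ ^ 2 * (1 + Ly) ≤ Λ * γ t := by
    have h1 : Λ * (κ * ‖p t - y t‖ ^ 2) ≤ Λ * γ t := mul_le_mul_of_nonneg_left (hmono t htc) hΛ0
    have h2 : Λ * (κ * ‖p t - y t‖ ^ 2) = C * ‖p t - y t‖ ^ 2 * (1 + Ly) := by
      rw [hΛ]; field_simp
    linarith
  have hT1 : (H (p t)) (p t - y t) v - (G (p t) - G (y t)) v ≤ C * ‖p t - y t‖ ^ 2 * 1 := by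
    have e1 := taylor_le hG hC hH (hyr t htc) (hpr t htc)
    have e2 : (H (p t)) (p t - y t) v - (G (p t) - G (y t)) v
        = (G (y t) - G (p t) - H (p t) (y t - p t)) v := by
      simp only [sub_apply, map_sub]; ring
    rw [e2]
    refine (le_abs_self _).trans ?_
    rw [← Real.norm_eq_abs]
    refine (ContinuousLinearMap.le_opNorm _ _).trans ?_
    rw [norm_sub_rev (y t)] at e1
    exact mul_le_mul e1 hv (norm_nonneg _) (by positivity)
  have hT2 : -((H (y t)) (p t - y t) (y' t) - (G (p t) - G (y t)) (y' t))
      ≤ C * ‖p t - y t‖ ^ 2 * Ly := by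
    have e1 := taylor_le hG hC hH (hpr t htc) (hyr t htc)
    have e2 : -((H (y t)) (p t - y t) (y' t) - (G (p t) - G (y t)) (y' t))
        = (G (p t) - G (y t) - H (y t) (p t - y t)) (y' t) := by
      simp only [sub_apply, map_sub]; ring
    rw [e2]
    refine (le_abs_self _).trans ?_
    rw [← Real.norm_eq_abs]
    refine (ContinuousLinearMap.le_opNorm _ _).trans ?_
    exact mul_le_mul e1 hyn (norm_nonneg _) (by positivity)
  -- interpolation error
  set θ : ℝ := (t - a) / (c - a) with hθ
  have hθ0 : 0 ≤ θ := div_nonneg (by linarith [htI.1]) hca.le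
  have hθ1 : θ ≤ 1 := (div_le_one hca).2 (by linarith [htI.2])
  have hθm : θ * (c - a) = t - a := div_mul_cancel₀ _ hca.ne'
  set W : E →L[ℝ] ℝ := (1 - θ) • (G u0 - b a) + θ • (G u1 - b c) with hW
  have hE : ‖(G (p t) - b t) - W‖ ≤ ε := by
    have e1 := interp_le hG hC hH hθ0 hθ1 hu0 (d := (c - a) • v) (by rw [← hu]; exact hu1)
    rw [smul_smul, hθm, ← hu] at e1
    have e1' : ‖G (p t) - ((1 - θ) • G u0 + θ • G u1)‖ ≤ 2 * C * (c - a) ^ 2 := by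
      refine e1.trans ?_
      rw [norm_smul, Real.norm_eq_abs, abs_of_pos hca]
      have : ((c - a) * ‖v‖) ^ 2 ≤ (c - a) ^ 2 := by
        have := mul_le_of_le_one_right hca.le hv
        have h0 : 0 ≤ (c - a) * ‖v‖ := by positivity
        nlinarith
      exact mul_le_mul_of_nonneg_left this (by positivity)
    have e2 := b_taylor hb hω htc
    have e3 := b_taylor hb hω (x := c) ⟨hac.le, le_rfl⟩
    have e4 : (G (p t) - b t) - W = (G (p t) - ((1 - θ) • G u0 + θ • G u1))
        - ((b t - b a - (t - a) • b' a) - θ • (b c - b a - (c - a) • b' a)) := by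
      rw [hW, ← hθm]; module
    rw [e4]
    refine (norm_sub_le _ _).trans ?_
    have e5 : ‖(b t - b a - (t - a) • b' a) - θ • (b c - b a - (c - a) • b' a)‖
        ≤ 2 * ω * (c - a) := by
      refine (norm_sub_le _ _).trans ?_
      rw [norm_smul, Real.norm_eq_abs, abs_of_nonneg hθ0]
      have h1 : θ * ‖b c - b a - (c - a) • b' a‖ ≤ ω * (c - a) :=
        (mul_le_of_le_one_left (norm_nonneg _) hθ1).trans e3
      have h2 : ω * (t - a) ≤ ω * (c - a) := mul_le_mul_of_nonneg_left (by linarith [htI.2]) hω0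
      linarith
    linarith
  have hEv : ((G (p t) - b t) - W) v ≤ ε * 1 := by
    refine (le_abs_self _).trans ?_
    rw [← Real.norm_eq_abs]
    exact (ContinuousLinearMap.le_opNorm _ _).trans (mul_le_mul hE hv (norm_nonneg _) hε0)
  have hEy : -((G (p t) - b t) - W) (y' t) ≤ ε * Ly := by
    refine (neg_le_abs _).trans ?_
    rw [← Real.norm_eq_abs]
    exact (ContinuousLinearMap.le_opNorm _ _).trans (mul_le_mul hE hyn (norm_nonneg _) hε0)
  have hWv : W v + ρ v ≤ Q := by
    have h1 : W v + ρ v = (1 - θ) * Q := by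
      have : ρ v = - (G u1 - b c) v := by linarith
      rw [this]
      simp only [hW, hQ, add_apply, smul_apply,
        sub_apply, smul_eq_mul]; ring
    rw [h1]
    exact mul_le_of_le_one_left hQ0 (by linarith)
  have hWy : - W (y' t) ≤ ρ (y' t) := by
    have h0 := mul_le_mul_of_nonneg_left (S0 (y' t)) (sub_nonneg.2 hθ1)
    have h1 := mul_le_mul_of_nonneg_left (S1 (y' t)) hθ0
    simp only [hW, add_apply, smul_apply, smul_eq_mul]
    linarith
  have hstv := hst v
  have hs1 := hsymm (p t) v (p t - y t)
  have hs2 := hsymm (y t) (y' t) (p t - y t)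
  simp only [sub_apply] at hs1 hs2 hstv hWy hWv hEy hEv hT1 hT2 heq ⊢
  rw [hs1, hs2, map_sub (G (p t)), map_sub (G (y t))]
  linarith

lemma step_phi {E : Type*} [NormedAddCommGroup E] [NormedSpace ℝ E]
    {G : E → E →L[ℝ] ℝ} {H : E → E →L[ℝ] E →L[ℝ] ℝ} (hG : ∀ x, HasFDerivAt G (H x) x)
    (hsymm : ∀ x v w, H x v w = H x w v)
    {r C : ℝ} (hC : 0 ≤ C)
    (hH : ∀ x w, ‖x‖ ≤ r → ‖w‖ ≤ r → ‖H x - H w‖ ≤ C * ‖x - w‖)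
    {b b' : ℝ → E →L[ℝ] ℝ} {ρ : E → ℝ} {a c : ℝ} (hac : a < c)
    {u0 u1 v0 v1 : E} (hu : u1 = u0 + (c - a) • v1) (hv1 : ‖v1‖ ≤ 1) (hv0 : ‖v0‖ ≤ 1)
    (hu0 : ‖u0‖ ≤ r) (hu1 : ‖u1‖ ≤ r)
    (S1 : ∀ w, -(G u1 - b c) w ≤ ρ w)
    (D0 : (G u0 - b a) v0 = - ρ v0)
    (hb : ∀ x ∈ Set.Icc a c, HasDerivAt b (b' x) x) {ω : ℝ}
    (hω : ∀ x ∈ Set.Icc a c, ‖b' x - b' c‖ ≤ ω)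
    (hpos : ∀ v, 0 ≤ H u1 v v) :
    ((G u0 - b a) - (G u1 - b c)) v1 ≤ (c - a) *
      ((-(1 / 2) * H u1 v1 v1 + b' c v1) - (-(1 / 2) * H u0 v0 v0 + b' a v0)
        + 3 * C * (c - a) + 3 * ω) := by
  have hca : 0 < c - a := sub_pos.2 hac
  have hω0 : 0 ≤ ω := (norm_nonneg _).trans (hω a ⟨le_rfl, hac.le⟩)
  have hd : u0 - u1 = -((c - a) • v1) := by rw [hu]; module
  have hdn : ‖u0 - u1‖ ≤ c - a := by
    rw [hd, norm_neg, norm_smul, Real.norm_eq_abs, abs_of_pos hca]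
    exact mul_le_of_le_one_right hca.le hv1
  have h1 : ((G u0 - b a) - (G u1 - b c)) v1 ≤ ((G u0 - b a) - (G u1 - b c)) (v1 - v0) := by
    have := S1 v0
    simp only [sub_apply, map_sub] at *
    linarith
  have e1 := taylor_le hG hC hH hu0 hu1
  have e1' : ‖G u0 - G u1 - H u1 (u0 - u1)‖ ≤ C * (c - a) ^ 2 :=
    e1.trans (mul_le_mul_of_nonneg_left (by gcongr) hC)
  have e2 := b_taylor hb hω (x := c) ⟨hac.le, le_rfl⟩
  have h2 : ((G u0 - b a) - (G u1 - b c)) (v1 - v0) =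
      ((G u0 - G u1 - H u1 (u0 - u1)) + (b c - b a - (c - a) • b' c)) (v1 - v0)
      + (c - a) * (b' c (v1 - v0) - H u1 v1 (v1 - v0)) := by
    rw [hd]
    simp only [sub_apply, add_apply, map_neg, map_smul,
      neg_apply, smul_apply, smul_eq_mul]
    ring
  have h3 : ((G u0 - G u1 - H u1 (u0 - u1)) + (b c - b a - (c - a) • b' c)) (v1 - v0)
      ≤ (C * (c - a) ^ 2 + ω * (c - a)) * 2 := by
    refine (le_abs_self _).trans ?_
    rw [← Real.norm_eq_abs]
    refine (ContinuousLinearMap.le_opNorm _ _).trans ?_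
    refine mul_le_mul ((norm_add_le _ _).trans (add_le_add e1' e2)) ?_ (norm_nonneg _)
      (by positivity)
    exact (norm_sub_le _ _).trans (by linarith)
  have h4 : -H u1 v1 (v1 - v0) ≤ -(1 / 2) * H u1 v1 v1 + (1 / 2) * H u1 v0 v0 := by
    have := hpos (v1 - v0)
    have hs := hsymm u1 v1 v0
    simp only [map_sub, sub_apply] at *
    linarith
  have h5 : H u1 v0 v0 - H u0 v0 v0 ≤ C * (c - a) := by
    have : H u1 v0 v0 - H u0 v0 v0 = (H u1 - H u0) v0 v0 := by simp
    rw [this]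
    refine (le_abs_self _).trans ?_
    rw [← Real.norm_eq_abs]
    refine (ContinuousLinearMap.le_opNorm₂ _ _ _).trans ?_
    have hb1 : ‖H u1 - H u0‖ ≤ C * (c - a) := by
      refine (hH u1 u0 hu1 hu0).trans (mul_le_mul_of_nonneg_left ?_ hC)
      rw [norm_sub_rev]; exact hdn
    calc ‖H u1 - H u0‖ * ‖v0‖ * ‖v0‖ ≤ (C * (c - a)) * 1 * 1 := by gcongr
      _ = _ := by ring
  have h6 : b' a v0 - b' c v0 ≤ ω := by
    have : b' a v0 - b' c v0 = (b' a - b' c) v0 := by simp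
    rw [this]
    refine (le_abs_self _).trans ?_
    rw [← Real.norm_eq_abs]
    refine (ContinuousLinearMap.le_opNorm _ _).trans ?_
    calc _ ≤ ω * 1 := mul_le_mul (hω a ⟨le_rfl, hac.le⟩) hv0 (norm_nonneg _) hω0
      _ = ω := mul_one _
  have h7 : b' c (v1 - v0) - H u1 v1 (v1 - v0) ≤
      ((-(1 / 2) * H u1 v1 v1 + b' c v1) - (-(1 / 2) * H u0 v0 v0 + b' a v0)
        + C * (c - a) + ω) := by
    have : 0 ≤ C * (c - a) := by positivity
    rw [map_sub]; linarith
  have h8 := mul_le_mul_of_nonneg_left h7 hca.le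
  rw [h2] at h1
  nlinarith


lemma first_order {E : Type*} [NormedAddCommGroup E] [NormedSpace ℝ E]
    {J : E → ℝ} {D : E →L[ℝ] ℝ} {ρ : E → ℝ} {S : Set E} {u x w : E} (hder : HasFDerivAt J D x)
    (hρ : ∀ p q : E, ∀ θ : ℝ, 0 ≤ θ → θ ≤ 1 → ρ (p + θ • (q - p)) ≤ ρ p + θ * (ρ q - ρ p))
    (hmin : ∀ w ∈ S, J x + ρ (x - u) ≤ J w + ρ (w - u))
    (hev : ∃ θ0 : ℝ, 0 < θ0 ∧ ∀ θ : ℝ, 0 < θ → θ < θ0 → x + θ • (w - x) ∈ S) :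
    0 ≤ D (w - x) + (ρ (w - u) - ρ (x - u)) := by
  obtain ⟨θ0, hθ0, hS⟩ := hev
  set f : ℝ → ℝ := fun θ => J (x + θ • (w - x)) + θ * (ρ (w - u) - ρ (x - u)) with hf
  have h1 : HasDerivAt (fun θ : ℝ => x + θ • (w - x)) (w - x) 0 := by
    simpa using ((hasDerivAt_id (0 : ℝ)).smul_const (w - x)).const_add x
  have hder' : HasFDerivAt J D (x + (0 : ℝ) • (w - x)) := by simpa using hder
  have h2 : HasDerivAt f (D (w - x) + (ρ (w - u) - ρ (x - u))) 0 := by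
    have h3 := (hder'.comp_hasDerivAt (0 : ℝ) h1).add
      ((hasDerivAt_id (0 : ℝ)).mul_const (ρ (w - u) - ρ (x - u)))
    rw [one_mul] at h3
    exact h3
  have h4 := h2.tendsto_slope_zero_right
  refine ge_of_tendsto h4 ?_
  have h5 : Set.Ioo (0 : ℝ) (min θ0 1) ∈ nhdsWithin (0 : ℝ) (Set.Ioi 0) :=
    Ioo_mem_nhdsGT (lt_min hθ0 one_pos)
  filter_upwards [h5] with θ hθ
  have ha := hmin _ (hS θ hθ.1 (hθ.2.trans_le (min_le_left _ _)))
  have hb := hρ (x - u) (w - u) θ hθ.1.le (hθ.2.le.trans (min_le_right _ _))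
  have hc : x - u + θ • (w - u - (x - u)) = x + θ • (w - x) - u := by module
  rw [hc] at hb
  simp only [hf, zero_add, zero_smul, add_zero, zero_mul, smul_eq_mul]
  refine mul_nonneg (inv_nonneg.2 hθ.1.le) ?_
  linarith

lemma R_facts {R : V → ℝ} (hcx : ConvexOn ℝ Set.univ R)
    (hhom : ∀ (c : ℝ) (v : V), 0 ≤ c → R (c • v) = c * R v) :
    R 0 = 0 ∧ (∀ p q, R (p + q) ≤ R p + R q) ∧
    (∀ p q : V, ∀ θ : ℝ, 0 ≤ θ → θ ≤ 1 → R (p + θ • (q - p)) ≤ R p + θ * (R q - R p)) := by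
  have h0 : R 0 = 0 := by simpa using hhom 0 0 le_rfl
  have hc : ∀ p q : V, ∀ θ : ℝ, 0 ≤ θ → θ ≤ 1 →
      R (p + θ • (q - p)) ≤ R p + θ * (R q - R p) := by
    intro p q θ h0 h1
    have := hcx.2 (Set.mem_univ p) (Set.mem_univ q) (sub_nonneg.2 h1) h0 (by ring)
    have e : p + θ • (q - p) = (1 - θ) • p + θ • q := by module
    rw [e]
    simp only [smul_eq_mul] at this
    linarith
  refine ⟨h0, ?_, hc⟩
  intro p q
  have h1 := hc p q (1 / 2) (by norm_num) (by norm_num)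
  have h2 := hhom 2 (p + (1 / 2 : ℝ) • (q - p)) (by norm_num)
  have e : (2 : ℝ) • (p + (1 / 2 : ℝ) • (q - p)) = p + q := by module
  rw [e] at h2
  linarith

/-- Bounds for `D²F`, `DF`, `F` on balls. -/
lemma ball_bounds {ι : Z →L[ℝ] V} {F : Z → ℝ} {DF : Z → V →L[ℝ] ℝ}
    {D2F : Z → Z →L[ℝ] V →L[ℝ] ℝ} (hι : ∀ w : Z, ‖ι w‖ ≤ ‖w‖)
    (hF : ∀ w : Z, HasFDerivAt F ((DF w).comp ι) w)
    (hDF : ∀ w : Z, HasFDerivAt DF (D2F w) w)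
    (hgr : ∃ CF q : ℝ, 0 < CF ∧ 1 ≤ q ∧ ∀ w v : Z, ‖D2F w v‖ ≤ CF * (1 + ‖w‖ ^ q) * ‖v‖)
    (r : ℝ) (hr : 0 ≤ r) :
    ∃ M : ℝ, 0 ≤ M ∧ ∀ w : Z, ‖w‖ ≤ r → ‖D2F w‖ ≤ M ∧ ‖DF w‖ ≤ M ∧ F w ≤ M := by
  obtain ⟨CF, q, hCF, hq, hb⟩ := hgr
  set M1 := CF * (1 + r ^ q) with hM1
  have hM1p : 0 ≤ M1 := by positivity
  have h1 : ∀ w : Z, ‖w‖ ≤ r → ‖D2F w‖ ≤ M1 := by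
    intro w hw
    refine ContinuousLinearMap.opNorm_le_bound _ hM1p ?_
    intro v
    refine (hb w v).trans ?_
    have : ‖w‖ ^ q ≤ r ^ q := Real.rpow_le_rpow (norm_nonneg _) hw (by linarith)
    rw [hM1]; gcongr
  have h2 : ∀ w : Z, ‖w‖ ≤ r → ‖DF w‖ ≤ ‖DF 0‖ + M1 * r := by
    intro w hw
    have e := lip_le hDF h1 hw (w := 0) (by simpa using hr)
    rw [sub_zero] at e
    have e2 := norm_le_norm_add_norm_sub' (DF w) (DF 0)
    have e3 : M1 * ‖w‖ ≤ M1 * r := by gcongr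
    linarith
  have hιn : ‖ι‖ ≤ 1 := ContinuousLinearMap.opNorm_le_bound _ zero_le_one (by simpa using hι)
  set M2 := ‖DF 0‖ + M1 * r with hM2
  have hM2p : 0 ≤ M2 := by positivity
  have h3 : ∀ w : Z, ‖w‖ ≤ r → ‖(DF w).comp ι‖ ≤ M2 := by
    intro w hw
    refine (ContinuousLinearMap.opNorm_comp_le _ _).trans ?_
    calc _ ≤ M2 * 1 := mul_le_mul (h2 w hw) hιn (norm_nonneg _) hM2p
      _ = M2 := mul_one _
  refine ⟨M1 + M2 + (|F 0| + M2 * r), by positivity, ?_⟩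
  intro w hw
  have e := lip_le hF h3 hw (w := 0) (by simpa using hr)
  rw [sub_zero, Real.norm_eq_abs] at e
  have e3 : M2 * ‖w‖ ≤ M2 * r := by gcongr
  have e4 : 0 ≤ M2 * r := by positivity
  have e5 := abs_nonneg (F 0)
  have := h1 w hw
  have := h2 w hw
  refine ⟨by linarith, by linarith, ?_⟩
  have := le_abs_self (F w - F 0)
  have := le_abs_self (F 0)
  linarith

/-- Each minimizer over the `V`-ball is `O(√τ)`-close in `Z` to a stable previous iterate. -/
lemma step_small {ι : Z →L[ℝ] V} {A : Z →L[ℝ] Z →L[ℝ] ℝ} {α : ℝ} {F : Z → ℝ}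
    {DF : Z → V →L[ℝ] ℝ} {D2F : Z → Z →L[ℝ] V →L[ℝ] ℝ} {R : V → ℝ} {ℓ : ℝ → V →L[ℝ] ℝ}
    {T Mℓ ρ₂ : ℝ} (hι : ∀ w : Z, ‖ι w‖ ≤ ‖w‖)
    (hsymm : ∀ z w : Z, A z w = A w z) (hα : 0 < α) (hcoer : ∀ w : Z, α * ‖w‖ ^ 2 ≤ A w w)
    (hF0 : ∀ w : Z, 0 ≤ F w)
    (hF : ∀ w : Z, HasFDerivAt F ((DF w).comp ι) w)
    (hDF : ∀ w : Z, HasFDerivAt DF (D2F w) w)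
    (hgr : ∃ CF q : ℝ, 0 < CF ∧ 1 ≤ q ∧ ∀ w v : Z, ‖D2F w v‖ ≤ CF * (1 + ‖w‖ ^ q) * ‖v‖)
    (hR0 : R 0 = 0) (hRn : ∀ v : V, 0 ≤ R v) (hρ₂ : 0 < ρ₂) (hR : ∀ v : V, R v ≤ ρ₂ * ‖v‖)
    (hMℓ0 : 0 ≤ Mℓ) (hMℓ : ∀ t ∈ Set.Icc (0 : ℝ) T, ‖ℓ t‖ ≤ Mℓ)
    (r0 : ℝ) (hr0 : 0 ≤ r0) :
    ∃ C0 : ℝ, 0 ≤ C0 ∧ ∀ τ : ℝ, 0 < τ → τ ≤ 1 → ∀ u x : Z, ∀ t' ∈ Set.Icc (0 : ℝ) T,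
      ∀ t'' ∈ Set.Icc (0 : ℝ) T, ‖u‖ ≤ r0 → (∀ w : Z, -(DI A DF ℓ ι t' u) w ≤ R (ι w)) →
      ‖ι (x - u)‖ ≤ τ →
      (∀ w : Z, ‖ι (w - u)‖ ≤ τ →
        energy A F ℓ ι t'' x + R (ι (x - u)) ≤ energy A F ℓ ι t'' w + R (ι (w - u))) →
      ‖x - u‖ ^ 2 ≤ C0 * τ := by
  obtain ⟨M, hM0, hM⟩ := ball_bounds hι hF hDF hgr r0 hr0
  set B := ‖A‖ * r0 ^ 2 + 2 * (M + Mℓ) with hB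
  have hB0 : 0 ≤ B := by positivity
  set r1 := max r0 (Real.sqrt (B / α)) with hr1
  obtain ⟨M', hM'0, hM'⟩ := ball_bounds hι hF hDF hgr r1 (hr0.trans (le_max_left _ _))
  refine ⟨2 * (2 * M' + 2 * Mℓ + ρ₂) / α, by positivity, ?_⟩
  intro τ hτ hτ1 u x t' ht' t'' ht'' hu hst hxu hmin
  have hm := hmin u (by simpa using hτ.le)
  set d := x - u with hd
  have hx : x = u + d := by rw [hd]; abel
  simp only [sub_self, map_zero, hR0, add_zero, energy] at hm
  have hℓd : ∀ t ∈ Set.Icc (0 : ℝ) T, |ℓ t (ι d)| ≤ Mℓ * τ := by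
    intro t ht
    rw [← Real.norm_eq_abs]
    exact (ContinuousLinearMap.le_opNorm _ _).trans
      (mul_le_mul (hMℓ t ht) hxu (norm_nonneg _) hMℓ0)
  have hℓ1 := abs_le.1 (hℓd t'' ht'')
  have hℓ2 := abs_le.1 (hℓd t' ht')
  have hℓx : ℓ t'' (ι x) = ℓ t'' (ι u) + ℓ t'' (ι d) := by rw [hx, map_add, map_add]
  have hRd := hRn (ι d)
  have hxr : ‖x‖ ≤ r1 := by
    refine le_trans ?_ (le_max_right _ _)
    refine Real.le_sqrt_of_sq_le ?_
    rw [le_div_iff₀ hα]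
    have h1 := hcoer x
    have h2 := hF0 x
    have h3 := (hM u hu).2.2
    have h4 : A u u ≤ ‖A‖ * r0 ^ 2 := by
      refine (le_abs_self _).trans ?_
      rw [← Real.norm_eq_abs]
      refine (ContinuousLinearMap.le_opNorm₂ _ _ _).trans ?_
      rw [pow_two, ← mul_assoc]; gcongr
    have h5 : Mℓ * τ ≤ Mℓ := mul_le_of_le_one_right hMℓ0 hτ1
    rw [hB]; linarith
  have hur : ‖u‖ ≤ r1 := hu.trans (le_max_left _ _)
  -- difference of `F`
  have hFd : |F x - F u| ≤ M' * τ := by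
    have h := norm_image_sub_le_of_norm_deriv_le_segment_01' (E := ℝ)
      (f := fun θ : ℝ => F (u + θ • d)) (f' := fun θ : ℝ => DF (u + θ • d) (ι d)) (C := M' * τ)
      ?_ ?_
    · simpa [hx] using h
    · intro θ _
      have h1 : HasDerivAt (fun θ : ℝ => u + θ • d) d θ := by
        simpa using ((hasDerivAt_id θ).smul_const d).const_add u
      have h2 := (hF (u + θ • d)).comp_hasDerivAt θ h1
      exact h2.hasDerivWithinAt
    · intro θ hθ
      have hmr : ‖u + θ • d‖ ≤ r1 := by
        have e : u + θ • d = (1 - θ) • u + θ • x := by rw [hx]; module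
        rw [e]
        have := (convex_closedBall (0 : Z) r1) (x := u) (by simpa using hur) (y := x)
          (by simpa using hxr) (sub_nonneg.2 hθ.2.le) hθ.1 (by ring)
        simpa using this
      exact (ContinuousLinearMap.le_opNorm _ _).trans
        (mul_le_mul (hM' _ hmr).2.1 hxu (norm_nonneg _) hM'0)
  have hFd' := abs_le.1 hFd
  have hDFd : |DF u (ι d)| ≤ M' * τ := by
    rw [← Real.norm_eq_abs]
    exact (ContinuousLinearMap.le_opNorm _ _).trans
      (mul_le_mul (hM' _ hur).2.1 hxu (norm_nonneg _) hM'0)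
  have hDFd' := abs_le.1 hDFd
  have hst' := hst d
  have hRd2 : R (ι d) ≤ ρ₂ * τ := (hR _).trans (mul_le_mul_of_nonneg_left hxu hρ₂.le)
  simp only [DI, sub_apply, add_apply, ContinuousLinearMap.comp_apply] at hst'
  have hAx : A x x = A u u + 2 * A u d + A d d := by
    rw [hx]; simp only [map_add, add_apply]; rw [hsymm d u]; ring
  have hcd := hcoer d
  have hfin : α * ‖d‖ ^ 2 ≤ 2 * (2 * M' + 2 * Mℓ + ρ₂) * τ := by
    linarith
  rw [div_mul_eq_mul_div, le_div_iff₀ hα]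
  linarith


/-- Consequences of minimality over the `V`-ball under local convexity. -/
lemma scheme_step {ι : Z →L[ℝ] V} (hι : ∀ w : Z, ‖ι w‖ ≤ ‖w‖)
    {G : Z → Z →L[ℝ] ℝ} {H : Z → Z →L[ℝ] Z →L[ℝ] ℝ} (hG : ∀ x, HasFDerivAt G (H x) x)
    {b : ℝ → Z →L[ℝ] ℝ} {ρ : Z → ℝ} {κ L τ a c : ℝ} {u x : Z} {J : Z → ℝ}
    (hρ0 : ρ 0 = 0) (hρa : ∀ p q, ρ (p + q) ≤ ρ p + ρ q)
    (hρ : ∀ p q : Z, ∀ θ : ℝ, 0 ≤ θ → θ ≤ 1 → ρ (p + θ • (q - p)) ≤ ρ p + θ * (ρ q - ρ p))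
    (hκ : 0 < κ) (hL0 : 0 ≤ L) (hLκ : L < κ) (hτ : 0 < τ) (hac : a ≤ c) (hcτ : c - a ≤ τ)
    (hconv : ∀ θ ∈ Set.Icc (0 : ℝ) 1, ∀ v, κ * ‖v‖ ^ 2 ≤ H (u + θ • (x - u)) v v)
    (hJ : HasFDerivAt J (G x - b c) x)
    (hS : ∀ w, -(G u - b a) w ≤ ρ w) (hb : ‖b c - b a‖ ≤ L * (c - a))
    (hxu : ‖ι (x - u)‖ ≤ τ)
    (hmin : ∀ w, ‖ι (w - u)‖ ≤ τ → J x + ρ (x - u) ≤ J w + ρ (w - u)) :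
    κ * ‖x - u‖ ≤ L * (c - a) ∧ (∀ w, -(G x - b c) w ≤ ρ w) ∧
      (G x - b c) (x - u) = - ρ (x - u) := by
  have hmono := mono_of_conv hG hconv
  have h1 := first_order (S := {w | ‖ι (w - u)‖ ≤ τ}) (w := u) hJ hρ hmin ⟨1, one_pos, by
    intro θ h0 h1
    have e : x + θ • (u - x) - u = (1 - θ) • (x - u) := by module
    simp only [Set.mem_ofPred_eq]
    rw [e, map_smul, norm_smul, Real.norm_eq_abs, abs_of_pos (by linarith)]
    exact (mul_le_of_le_one_left (norm_nonneg _) (by linarith)).trans hxu⟩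
  rw [sub_self, hρ0, ← neg_sub x u, map_neg] at h1
  have h2 := hS (x - u)
  have h3 : κ * ‖x - u‖ ^ 2 ≤ (b c - b a) (x - u) := by
    simp only [sub_apply] at h1 h2 hmono ⊢
    linarith
  have h4 : (b c - b a) (x - u) ≤ L * (c - a) * ‖x - u‖ := by
    refine (le_abs_self _).trans ?_
    rw [← Real.norm_eq_abs]
    exact (ContinuousLinearMap.le_opNorm _ _).trans
      (mul_le_mul_of_nonneg_right hb (norm_nonneg _))
  have hA : κ * ‖x - u‖ ≤ L * (c - a) := by
    rcases (norm_nonneg (x - u)).eq_or_lt with h | h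
    · rw [← h, mul_zero]; exact mul_nonneg hL0 (by linarith)
    · have h5 := h3.trans h4
      refine le_of_mul_le_mul_right ?_ h
      calc _ = κ * ‖x - u‖ ^ 2 := by ring
        _ ≤ _ := h5
  have hlt : ‖ι (x - u)‖ < τ := by
    refine (hι _).trans_lt ?_
    have : L * (c - a) < κ * τ := by
      have e1 : L * (c - a) ≤ L * τ := mul_le_mul_of_nonneg_left hcτ hL0
      have e2 : L * τ < κ * τ := mul_lt_mul_of_pos_right hLκ hτ
      linarith
    exact lt_of_mul_lt_mul_left (hA.trans_lt this) hκ.le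
  have hB : ∀ w, -(G x - b c) w ≤ ρ w := by
    intro w
    have h5 := first_order (S := {w | ‖ι (w - u)‖ ≤ τ}) (w := x + w) hJ hρ hmin
      ⟨(τ - ‖ι (x - u)‖) / (‖ι w‖ + 1), by
        have := norm_nonneg (ι w)
        exact div_pos (by linarith) (by linarith), by
      intro θ h0 h1
      have e : x + θ • (x + w - x) - u = (x - u) + θ • w := by module
      simp only [Set.mem_ofPred_eq]
      rw [e, map_add, map_smul]
      refine (norm_add_le _ _).trans ?_
      rw [norm_smul, Real.norm_eq_abs, abs_of_pos h0]
      have h6 := norm_nonneg (ι w)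
      rw [lt_div_iff₀ (by linarith)] at h1
      nlinarith⟩
    have h6 := hρa (x - u) w
    have e : x + w - u = x - u + w := by abel
    rw [e, add_sub_cancel_left] at h5
    linarith
  refine ⟨hA, hB, ?_⟩
  have := hB (x - u)
  linarith

lemma opNorm_le_of_quad {B : Z →L[ℝ] Z →L[ℝ] ℝ} (hs : ∀ v w, B v w = B w v) {c : ℝ}
    (hc : 0 ≤ c) (h : ∀ v, |B v v| ≤ c * ‖v‖ ^ 2) : ‖B‖ ≤ c := by
  refine ContinuousLinearMap.opNorm_le_of_unit_norm hc ?_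
  intro v hv
  refine ContinuousLinearMap.opNorm_le_of_unit_norm hc ?_
  intro w hw
  rw [Real.norm_eq_abs]
  have h1 := abs_le.1 (h (v + w))
  have h2 := abs_le.1 (h (v - w))
  have hp := parallelogram_law_with_norm ℝ v w
  rw [hv, hw] at hp
  have hs' := hs v w
  simp only [map_add, map_sub, add_apply, sub_apply] at h1 h2
  have e : c * ‖v + w‖ ^ 2 + c * ‖v - w‖ ^ 2 = c * 4 := by
    rw [← mul_add]; congr 1; nlinarith
  rw [abs_le]
  constructor <;> linarith

lemma bv_primitive {F' : Type*} [NormedAddCommGroup F'] {g : ℝ → F'} {T : ℝ} (hT : 0 < T)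
    (hg : BoundedVariationOn g (Set.Icc (0 : ℝ) T)) :
    ∃ W : ℝ → ℝ, W 0 = 0 ∧ ∀ s t : ℝ, 0 ≤ s → s ≤ t → t ≤ T →
      ∀ p ∈ Set.Icc s t, ∀ q ∈ Set.Icc s t, ‖g p - g q‖ ≤ W t - W s := by
  refine ⟨variationOnFromTo g (Set.Icc 0 T) 0, variationOnFromTo.self _ _ _, ?_⟩
  intro s t h0 hst hT' p hp q hq
  have hl : LocallyBoundedVariationOn g (Set.Icc (0 : ℝ) T) := hg.locallyBoundedVariationOn
  have hs : s ∈ Set.Icc (0 : ℝ) T := ⟨h0, hst.trans hT'⟩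
  have ht : t ∈ Set.Icc (0 : ℝ) T := ⟨h0.trans hst, hT'⟩
  rw [variationOnFromTo.sub_right hl ⟨le_rfl, hT.le⟩ ht hs, variationOnFromTo.eq_of_le _ _ hst]
  have h1 := eVariationOn.edist_le g (s := Set.Icc 0 T ∩ Set.Icc s t)
    ⟨⟨h0.trans hp.1, hp.2.trans hT'⟩, hp⟩ ⟨⟨h0.trans hq.1, hq.2.trans hT'⟩, hq⟩
  have h2 := ENNReal.toReal_mono (hl s t hs ht) h1
  rwa [edist_dist, ENNReal.toReal_ofReal dist_nonneg, dist_eq_norm] at h2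

lemma sol_facts {A : Z →L[ℝ] Z →L[ℝ] ℝ} {DF : Z → V →L[ℝ] ℝ} {ℓ : ℝ → V →L[ℝ] ℝ}
    {R : V → ℝ} {ι : Z →L[ℝ] V} {T : ℝ} {z₀ : Z} {y : ℝ → Z} (hT : 0 < T)
    (hR0 : R 0 = 0) (hRa : ∀ p q, R (p + q) ≤ R p + R q)
    (hhom : ∀ (c : ℝ) (v : V), 0 ≤ c → R (c • v) = c * R v)
    (hy : IsDiffSol A DF ℓ R ι T z₀ y) {Ly : ℝ≥0}
    (hL : LipschitzOnWith Ly y (Set.Icc (0 : ℝ) T)) :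
    ∃ y' : ℝ → Z, ∀ᵐ s : ℝ, s ∈ Set.Ioo (0 : ℝ) T → HasDerivAt y (y' s) s ∧ ‖y' s‖ ≤ Ly ∧
      (∀ w, -(DI A DF ℓ ι s (y s)) w ≤ R (ι w)) ∧
      (DI A DF ℓ ι s (y s)) (y' s) = - R (ι (y' s)) := by
  obtain ⟨_, y', hint, hrep, hincl⟩ := hy
  refine ⟨y', ?_⟩
  have h1 := hint.ae_hasDerivAt_integral
  rw [Set.uIcc_of_le hT.le] at h1
  rw [ae_restrict_iff' measurableSet_Ioo] at hincl
  filter_upwards [h1, hincl] with s hs1 hs2 hs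
  have hd0 := (hs1 ⟨hs.1.le, hs.2.le⟩ 0 ⟨le_rfl, hT.le⟩).const_add z₀
  have hd : HasDerivAt y (y' s) s := by
    refine hd0.congr_of_eventuallyEq ?_
    filter_upwards [Ioo_mem_nhds hs.1 hs.2] with x hx
    exact hrep x ⟨hx.1.le, hx.2.le⟩
  obtain ⟨ξ, hξ, hξe⟩ := hs2 hs
  have hξw : ∀ w : Z, (DI A DF ℓ ι s (y s)) w = - ξ (ι w) := by
    intro w
    have := congrArg (fun f : Z →L[ℝ] ℝ => f w) hξe
    simp only [add_apply, ContinuousLinearMap.comp_apply, zero_apply] at this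
    linarith
  simp only [subdiff, Set.mem_ofPred_eq] at hξ
  have e0 := hξ 0
  have e2 := hξ ((2 : ℝ) • ι (y' s))
  rw [hhom 2 _ (by norm_num)] at e2
  have e3 : (2 : ℝ) • ι (y' s) - ι (y' s) = ι (y' s) := by module
  rw [e3] at e2
  rw [hR0, zero_sub, map_neg] at e0
  refine ⟨hd, hd.le_of_lipschitzOn (Icc_mem_nhds hs.1 hs.2) hL, ?_, ?_⟩
  · intro w
    have e4 := hξ (ι (y' s) + ι w)
    have e5 := hRa (ι (y' s)) (ι w)
    rw [add_sub_cancel_left] at e4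
    rw [hξw]; linarith
  · rw [hξw]; linarith


/-- The invariant propagated along the (time-shifted) scheme. -/
def Inv (G : Z → Z →L[ℝ] ℝ) (H : Z → Z →L[ℝ] Z →L[ℝ] ℝ) (b b' : ℝ → Z →L[ℝ] ℝ) (ρ : Z → ℝ)
    (y : ℝ → Z) (W : ℝ → ℝ) (Λ Cc K τ : ℝ) (a : ℝ) (u : Z) : Prop :=
  (∀ w, -(G u - b a) w ≤ ρ w) ∧ ‖u - y a‖ ≤ K * τ ∧ ∃ v : Z, ‖v‖ ≤ 1 ∧ (G u - b a) v = - ρ v ∧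
    Real.exp (-Λ * a) * (G u - G (y a)) (u - y a) ≤
      τ ^ 2 * (2 * (-(1 / 2) * H u v v + b' a v) + Cc * (a + W a))

set_option maxHeartbeats 1000000 in
lemma inv_step
    {G : Z → Z →L[ℝ] ℝ} {H : Z → Z →L[ℝ] Z →L[ℝ] ℝ} (hG : ∀ x, HasFDerivAt G (H x) x)
    (hsymm : ∀ x v w, H x v w = H x w v)
    {r C M Δ κ Ly T Mb K τ : ℝ} (hC : 0 ≤ C) (hM0 : 0 ≤ M) (hκ : 0 < κ) (hLy : 0 ≤ Ly)
    (hH : ∀ x w, ‖x‖ ≤ r → ‖w‖ ≤ r → ‖H x - H w‖ ≤ C * ‖x - w‖)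
    (hM : ∀ x, ‖x‖ ≤ r → ‖H x‖ ≤ M)
    {b b' : ℝ → Z →L[ℝ] ℝ} {ρ : Z → ℝ} {W : ℝ → ℝ}
    (hρh : ∀ (c : ℝ) (v : Z), 0 ≤ c → ρ (c • v) = c * ρ v)
    (hb : ∀ x ∈ Set.Icc (0 : ℝ) T, HasDerivAt b (b' x) x)
    (hW : ∀ s t : ℝ, 0 ≤ s → s ≤ t → t ≤ T →
      ∀ p ∈ Set.Icc s t, ∀ q ∈ Set.Icc s t, ‖b' p - b' q‖ ≤ W t - W s)
    (hMb : ∀ s ∈ Set.Icc (0 : ℝ) T, ‖b' s‖ ≤ Mb)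
    {y y' : ℝ → Z}
    (hyL : ∀ s ∈ Set.Icc (0 : ℝ) T, ∀ t ∈ Set.Icc (0 : ℝ) T, ‖y s - y t‖ ≤ Ly * |s - t|)
    (hy : ∀ᵐ t : ℝ, t ∈ Set.Ioo 0 T → HasDerivAt y (y' t) t ∧ ‖y' t‖ ≤ Ly ∧
      (∀ w, -(G (y t) - b t) w ≤ ρ w) ∧ (G (y t) - b t) (y' t) = - ρ (y' t))
    (hr : ∀ t ∈ Set.Icc 0 T, ∀ x, ‖x - y t‖ ≤ Δ → ‖x‖ ≤ r)
    (hconv : ∀ t ∈ Set.Icc 0 T, ∀ x, ‖x - y t‖ ≤ Δ → ∀ v, κ * ‖v‖ ^ 2 ≤ H x v v)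
    (hK0 : 0 ≤ K)
    (hK : Real.exp (C * (1 + Ly) / κ * T) * (2 * Mb + (10 + 4 * Ly) * (C + 1) * (T + W T))
      ≤ κ * K ^ 2)
    (hτ : 0 < τ)
    {a c : ℝ} (ha : 0 ≤ a) (hac : a < c) (hcT : c ≤ T) (hcaτ : c - a ≤ τ) {u x : Z}
    (hI : Inv G H b b' ρ y W (C * (1 + Ly) / κ) ((10 + 4 * Ly) * (C + 1)) K τ a u)
    (hS1 : ∀ w, -(G x - b c) w ≤ ρ w) (hD1 : (G x - b c) (x - u) = - ρ (x - u))
    (hd : ‖x - u‖ ≤ c - a)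
    (hclose : ∀ t ∈ Set.Icc a c, ∀ θ ∈ Set.Icc (0 : ℝ) 1, ‖u + θ • (x - u) - y t‖ ≤ Δ) :
    Inv G H b b' ρ y W (C * (1 + Ly) / κ) ((10 + 4 * Ly) * (C + 1)) K τ c x := by
  obtain ⟨hS0, -, v0, hv0, hD0, hg⟩ := hI
  have hca : 0 < c - a := sub_pos.2 hac
  have hsub : ∀ t ∈ Set.Icc a c, t ∈ Set.Icc 0 T := fun t ht => ⟨ha.trans ht.1, ht.2.trans hcT⟩
  have haI : a ∈ Set.Icc a c := ⟨le_rfl, hac.le⟩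
  have hcI : c ∈ Set.Icc a c := ⟨hac.le, le_rfl⟩
  set v : Z := (c - a)⁻¹ • (x - u) with hv
  have hxv : x = u + (c - a) • v := by
    rw [hv, smul_smul, mul_inv_cancel₀ hca.ne', one_smul]; abel
  have hvn : ‖v‖ ≤ 1 := by
    rw [hv, norm_smul, norm_inv, Real.norm_eq_abs, abs_of_pos hca, inv_mul_le_one₀ hca]
    exact hd
  have hDv : (G x - b c) v = - ρ v := by
    rw [hv, map_smul, hD1, hρh _ _ (inv_nonneg.2 hca.le), smul_eq_mul]; ring
  have hu_c : ‖u - y c‖ ≤ Δ := by simpa using hclose c hcI 0 ⟨le_rfl, zero_le_one⟩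
  have hx_c : ‖x - y c‖ ≤ Δ := by simpa using hclose c hcI 1 ⟨zero_le_one, le_rfl⟩
  have hWac := hW a c ha hac.le hcT
  set ω := W c - W a with hω
  have hω0 : 0 ≤ ω := (norm_nonneg _).trans (hWac a haI a haI)
  have sg := step_gamma hG hsymm hC hM0 hκ hLy hH hM ha hac hxv hvn hS0 hS1 hDv
    (fun t ht => hb t (hsub t ht)) (ω := ω) (fun t ht => hWac t ht a haI)
    (fun s hs t ht => hyL s (hsub s hs) t (hsub t ht)) (y' := y') (by
      filter_upwards [hy] with t ht hti
      exact ht ⟨ha.trans_lt hti.1, hti.2.trans_le hcT⟩) (Δ := Δ) (by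
      intro t ht
      have e : (t - a) • v = ((t - a) / (c - a)) • (x - u) := by
        rw [hv, smul_smul, div_eq_mul_inv]
      rw [e]
      refine hclose t ht _ ⟨div_nonneg (by linarith [ht.1]) hca.le, ?_⟩
      rw [div_le_one hca]; linarith [ht.2])
    (fun t ht => hr t (hsub t ht)) (fun t ht => hconv t (hsub t ht))
  have sp := step_phi hG hsymm hC hH hac hxv hvn hv0 (hr c (hsub c hcI) u hu_c)
    (hr c (hsub c hcI) x hx_c) hS1 hD0 (fun t ht => hb t (hsub t ht)) (ω := ω)
    (fun t ht => hWac t ht c hcI) (fun w => by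
      have := hconv c (hsub c hcI) x hx_c w
      have h2 : 0 ≤ κ * ‖w‖ ^ 2 := by positivity
      linarith)
  set Q := ((G u - b a) - (G x - b c)) v with hQ
  have hQ0 : 0 ≤ Q := by
    have h2 : Q = (G u - b a) v - (G x - b c) v := by rw [hQ, sub_apply]
    have := hS0 v
    rw [h2, hDv]
    linarith
  set Φ1 := -(1 / 2) * H x v v + b' c v with hΦ1
  set Φ0 := -(1 / 2) * H u v0 v0 + b' a v0 with hΦ0
  set h := c - a with hh
  set P := Φ1 - Φ0 + 3 * C * h + 3 * ω with hP
  have hP0 : 0 ≤ P := by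
    by_contra hneg
    have : h * P < 0 := mul_neg_of_pos_of_neg hca (not_le.1 hneg)
    linarith
  have hh2 : h ^ 2 ≤ τ ^ 2 := by gcongr
  have hQh : Q * h ≤ τ ^ 2 * P := by
    calc Q * h ≤ (h * P) * h := mul_le_mul_of_nonneg_right sp hca.le
      _ = h ^ 2 * P := by ring
      _ ≤ _ := mul_le_mul_of_nonneg_right hh2 hP0
  have hεh : (2 * C * h ^ 2 + 2 * ω * h) * (1 + Ly) * h ≤ τ ^ 2 * (2 * (1 + Ly) * (C * h + ω)) := by
    calc _ = h ^ 2 * (2 * (1 + Ly) * (C * h + ω)) := by ring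
      _ ≤ _ := mul_le_mul_of_nonneg_right hh2 (by positivity)
  have hinc : 6 * C * h + 6 * ω + 4 * (1 + Ly) * (C * h + ω)
      ≤ (10 + 4 * Ly) * (C + 1) * (h + ω) := by
    have e1 : 0 ≤ (10 + 4 * Ly) * (C * ω) := by positivity
    have e2 : 0 ≤ (10 + 4 * Ly) * h := by positivity
    have e : (10 + 4 * Ly) * (C + 1) * (h + ω)
        = (6 * C * h + 6 * ω + 4 * (1 + Ly) * (C * h + ω))
          + (10 + 4 * Ly) * (C * ω) + (10 + 4 * Ly) * h := by ring
    linarith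
  have hinc2 := mul_le_mul_of_nonneg_left hinc (sq_nonneg τ)
  have hfin : Real.exp (-(C * (1 + Ly) / κ) * c) * (G x - G (y c)) (x - y c) ≤
      τ ^ 2 * (2 * Φ1 + (10 + 4 * Ly) * (C + 1) * (c + W c)) := by
    have e : c + W c = (a + W a) + (h + ω) := by rw [hh, hω]; ring
    rw [e]
    have : τ ^ 2 * (2 * Φ1 + (10 + 4 * Ly) * (C + 1) * ((a + W a) + (h + ω)))
      = τ ^ 2 * (2 * Φ0 + (10 + 4 * Ly) * (C + 1) * (a + W a)) + 2 * (τ ^ 2 * P)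
        - τ ^ 2 * (6 * C * h + 6 * ω) + τ ^ 2 * ((10 + 4 * Ly) * (C + 1) * (h + ω)) := by
      rw [hP]; ring
    rw [this]
    linarith
  refine ⟨hS1, ?_, v, hvn, hDv, hfin⟩
  -- the norm bound
  have hmono : κ * ‖x - y c‖ ^ 2 ≤ (G x - G (y c)) (x - y c) := by
    refine mono_of_conv hG ?_
    intro θ hθ w
    refine hconv c (hsub c hcI) _ ?_ w
    rw [add_sub_cancel_left, norm_smul, Real.norm_eq_abs, abs_of_nonneg hθ.1]
    exact (mul_le_of_le_one_left (norm_nonneg _) hθ.2).trans hx_c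
  set Λ := C * (1 + Ly) / κ with hΛ
  have hΛ0 : 0 ≤ Λ := by positivity
  have hΦle : Φ1 ≤ Mb := by
    have h1 := hconv c (hsub c hcI) x hx_c v
    have h2 : 0 ≤ κ * ‖v‖ ^ 2 := by positivity
    have h3 : b' c v ≤ Mb := by
      refine (le_abs_self _).trans ?_
      rw [← Real.norm_eq_abs]
      refine (ContinuousLinearMap.le_opNorm _ _).trans ?_
      have hm := hMb c (hsub c hcI)
      calc _ ≤ Mb * 1 := mul_le_mul hm hvn (norm_nonneg _) ((norm_nonneg _).trans hm)
        _ = Mb := mul_one _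
    rw [hΦ1]; linarith
  have hWT : W c ≤ W T := by
    have := hW c T (ha.trans hac.le) hcT le_rfl c ⟨le_rfl, hcT⟩ c ⟨le_rfl, hcT⟩
    rw [sub_self, norm_zero] at this
    linarith
  have hbr : 2 * Φ1 + (10 + 4 * Ly) * (C + 1) * (c + W c)
      ≤ 2 * Mb + (10 + 4 * Ly) * (C + 1) * (T + W T) := by
    have : (10 + 4 * Ly) * (C + 1) * (c + W c) ≤ (10 + 4 * Ly) * (C + 1) * (T + W T) :=
      mul_le_mul_of_nonneg_left (by linarith) (by positivity)
    linarith
  have hγ0 : 0 ≤ (G x - G (y c)) (x - y c) := le_trans (by positivity) hmono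
  have hgam : (G x - G (y c)) (x - y c) ≤ κ * K ^ 2 * τ ^ 2 := by
    have e1 : (G x - G (y c)) (x - y c)
        = Real.exp (Λ * c) * (Real.exp (-Λ * c) * (G x - G (y c)) (x - y c)) := by
      rw [← mul_assoc, ← Real.exp_add]; simp
    have e2 : Real.exp (Λ * c) ≤ Real.exp (Λ * T) :=
      Real.exp_le_exp.2 (mul_le_mul_of_nonneg_left hcT hΛ0)
    have e3 : 0 ≤ Real.exp (-Λ * c) * (G x - G (y c)) (x - y c) := by positivity
    rw [e1]
    calc _ ≤ Real.exp (Λ * T) * (Real.exp (-Λ * c) * (G x - G (y c)) (x - y c)) :=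
          mul_le_mul_of_nonneg_right e2 e3
      _ ≤ Real.exp (Λ * T) * (τ ^ 2 * (2 * Mb + (10 + 4 * Ly) * (C + 1) * (T + W T))) := by
          refine mul_le_mul_of_nonneg_left (hfin.trans ?_) (Real.exp_pos _).le
          exact mul_le_mul_of_nonneg_left hbr (sq_nonneg τ)
      _ = (Real.exp (Λ * T) * (2 * Mb + (10 + 4 * Ly) * (C + 1) * (T + W T))) * τ ^ 2 := by ring
      _ ≤ _ := mul_le_mul_of_nonneg_right hK (sq_nonneg τ)
  have hsq : ‖x - y c‖ ^ 2 ≤ (K * τ) ^ 2 := by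
    refine le_of_mul_le_mul_left ?_ hκ
    calc _ ≤ _ := hmono
      _ ≤ _ := hgam
      _ = _ := by ring
  exact le_of_sq_le_sq hsq (by positivity)



/-- The first derivative of the autonomous part of the energy. -/
def Gop (A : Z →L[ℝ] Z →L[ℝ] ℝ) (DF : Z → V →L[ℝ] ℝ) (ι : Z →L[ℝ] V) (x : Z) : Z →L[ℝ] ℝ :=
  A x + (DF x).comp ι

/-- The second derivative of the energy. -/
def Hop (A : Z →L[ℝ] Z →L[ℝ] ℝ) (D2F : Z → Z →L[ℝ] V →L[ℝ] ℝ) (ι : Z →L[ℝ] V) (x : Z) :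
    Z →L[ℝ] Z →L[ℝ] ℝ :=
  A + ((ContinuousLinearMap.compL ℝ Z V ℝ).flip ι).comp (D2F x)

lemma Hop_apply (A : Z →L[ℝ] Z →L[ℝ] ℝ) (D2F : Z → Z →L[ℝ] V →L[ℝ] ℝ) (ι : Z →L[ℝ] V) (x v w : Z) :
    Hop A D2F ι x v w = A v w + D2F x v (ι w) := by
  simp [Hop]

lemma Gop_deriv {A : Z →L[ℝ] Z →L[ℝ] ℝ} {DF : Z → V →L[ℝ] ℝ} {D2F : Z → Z →L[ℝ] V →L[ℝ] ℝ}
    {ι : Z →L[ℝ] V} (hDF : ∀ w : Z, HasFDerivAt DF (D2F w) w) (x : Z) :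
    HasFDerivAt (Gop A DF ι) (Hop A D2F ι x) x := by
  have h := (((ContinuousLinearMap.compL ℝ Z V ℝ).flip ι).hasFDerivAt (x := DF x)).comp x (hDF x)
  exact (A.hasFDerivAt (x := x)).add h

lemma Hop_symm {A : Z →L[ℝ] Z →L[ℝ] ℝ} {F : Z → ℝ} {DF : Z → V →L[ℝ] ℝ}
    {D2F : Z → Z →L[ℝ] V →L[ℝ] ℝ} {ι : Z →L[ℝ] V} (hsymm : ∀ z w : Z, A z w = A w z)
    (hF : ∀ w : Z, HasFDerivAt F ((DF w).comp ι) w)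
    (hDF : ∀ w : Z, HasFDerivAt DF (D2F w) w) (x v w : Z) :
    Hop A D2F ι x v w = Hop A D2F ι x w v := by
  have h := (((ContinuousLinearMap.compL ℝ Z V ℝ).flip ι).hasFDerivAt (x := DF x)).comp x (hDF x)
  have h2 := second_derivative_symmetric (f := F) (f' := fun w => (DF w).comp ι) hF h v w
  simp only [ContinuousLinearMap.comp_apply, ContinuousLinearMap.flip_apply,
    ContinuousLinearMap.compL_apply] at h2
  rw [Hop_apply, Hop_apply, hsymm v w, h2]

lemma energy_deriv {A : Z →L[ℝ] Z →L[ℝ] ℝ} {F : Z → ℝ} {DF : Z → V →L[ℝ] ℝ}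
    {ℓ : ℝ → V →L[ℝ] ℝ} {ι : Z →L[ℝ] V} (hsymm : ∀ z w : Z, A z w = A w z)
    (hF : ∀ w : Z, HasFDerivAt F ((DF w).comp ι) w) (s : ℝ) (x : Z) :
    HasFDerivAt (energy A F ℓ ι s) (Gop A DF ι x - (ℓ s).comp ι) x := by
  have h1 := ((A.hasFDerivAt (x := x)).clm_apply (hasFDerivAt_id x)).const_mul (1 / 2 : ℝ)
  have h2 := (h1.add (hF x)).sub (((ℓ s).comp ι).hasFDerivAt (x := x))
  refine HasFDerivAt.congr_fderiv (f := energy A F ℓ ι s) h2 ?_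
  ext w
  simp [Gop, hsymm w x]
  ring

lemma Hop_lip {A : Z →L[ℝ] Z →L[ℝ] ℝ} {D2F : Z → Z →L[ℝ] V →L[ℝ] ℝ} {ι : Z →L[ℝ] V}
    (hs : ∀ x v w, Hop A D2F ι x v w = Hop A D2F ι x w v) {r C : ℝ} (hC : 0 ≤ C)
    (h : ∀ z₁ z₂ v : Z, ‖z₁‖ ≤ r → ‖z₂‖ ≤ r →
      D2F z₁ v (ι v) - D2F z₂ v (ι v) ≤ C * ‖z₁ - z₂‖ * ‖v‖ ^ 2)
    (x w : Z) (hx : ‖x‖ ≤ r) (hw : ‖w‖ ≤ r) :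
    ‖Hop A D2F ι x - Hop A D2F ι w‖ ≤ C * ‖x - w‖ := by
  refine opNorm_le_of_quad ?_ (by positivity) ?_
  · intro p q
    simp only [sub_apply]
    rw [hs x p q, hs w p q]
  · intro v
    simp only [sub_apply, Hop_apply]
    have h1 := h x w v hx hw
    have h2 := h w x v hw hx
    rw [norm_sub_rev] at h2
    rw [abs_le]
    constructor <;> linarith

lemma Hop_bound {A : Z →L[ℝ] Z →L[ℝ] ℝ} {D2F : Z → Z →L[ℝ] V →L[ℝ] ℝ} {ι : Z →L[ℝ] V}
    (hι : ∀ w : Z, ‖ι w‖ ≤ ‖w‖) {M : ℝ} {x : Z} (h : ‖D2F x‖ ≤ M) :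
    ‖Hop A D2F ι x‖ ≤ ‖A‖ + M := by
  have hM : 0 ≤ M := (norm_nonneg (D2F x)).trans h
  refine ContinuousLinearMap.opNorm_le_bound₂ _ (by positivity) ?_
  intro v w
  rw [Hop_apply]
  have h1 := A.le_opNorm₂ v w
  have h2 := (D2F x).le_opNorm₂ v (ι w)
  have h3 : ‖D2F x‖ * ‖v‖ * ‖ι w‖ ≤ M * ‖v‖ * ‖w‖ := by gcongr; exact hι w
  calc _ ≤ ‖A v w‖ + ‖D2F x v (ι w)‖ := norm_add_le _ _
    _ ≤ ‖A‖ * ‖v‖ * ‖w‖ + M * ‖v‖ * ‖w‖ := by linarith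
    _ = _ := by ring

/-- Closedness of the stability condition, applied at the initial time. -/
lemma stable_zero {G : Z → Z →L[ℝ] ℝ} (hG : Continuous G) {b : ℝ → Z →L[ℝ] ℝ} {ρ : Z → ℝ}
    {y : ℝ → Z} {T : ℝ} (hT : 0 < T) (hb : ContinuousOn b (Set.Icc 0 T))
    (hy : ContinuousOn y (Set.Icc 0 T))
    (h : ∀ᵐ s : ℝ, s ∈ Set.Ioo (0 : ℝ) T → ∀ w, -(G (y s) - b s) w ≤ ρ w) (w : Z) :
    -(G (y 0) - b 0) w ≤ ρ w := by
  by_contra hneg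
  rw [not_le] at hneg
  have hc : ContinuousOn (fun s => -(G (y s) - b s) w) (Set.Icc 0 T) := by
    have h1 : ContinuousOn (fun s => G (y s) - b s) (Set.Icc 0 T) :=
      (hG.comp_continuousOn hy).sub hb
    exact (h1.clm_apply continuousOn_const).neg
  have h0 := hc 0 ⟨le_rfl, hT.le⟩
  have hev := h0.eventually (lt_mem_nhds hneg)
  rw [Filter.Eventually, mem_nhdsWithin] at hev
  obtain ⟨U, hUo, h0U, hU⟩ := hev
  obtain ⟨ε, hε, hεU⟩ := Metric.isOpen_iff.1 hUo 0 h0U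
  have hd := MeasureTheory.Measure.dense_of_ae h
  obtain ⟨s, hs, hs0, hsm⟩ := hd.exists_between (show (0 : ℝ) < min ε T from lt_min hε hT)
  have hsT : s < T := hsm.trans_le (min_le_right _ _)
  have hsε : s < ε := hsm.trans_le (min_le_left _ _)
  have h1 := hU ⟨hεU (by
    rw [Metric.mem_ball, Real.dist_eq, sub_zero, abs_of_pos hs0]; exact hsε), hs0.le, hsT.le⟩
  have h2 := hs ⟨hs0, hsT⟩ w
  simp only [Set.mem_ofPred_eq] at h1
  exact absurd h2 (not_le.2 h1)

/-- Theorem 3.19: let `y ∈ C^{0,1}([0,T];Z)` be a differential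
solution, let `I` be locally `κ`-uniformly convex around `y` with radius `Δ > 0`,
assume `ℓ ∈ W^{1,∞}` with `|ℓ|_Lip ≤ κ − δ` for some `δ ∈ (0,κ]`, `ℓ′ ∈ BV([0,T];V)`
and `I(t,·) ∈ C^{2,1}_loc(Z;ℝ)`. Then there are `K_loc > 0` and a threshold `τ̄ > 0`,
independent of `τ`, such that for all `τ ≤ τ̄` the back-transformed discrete
parameterized solution (the piecewise affine interpolant in physical time) satisfies
`‖z_τ(s) − y(s)‖_Z ≤ K_loc τ` for all `s ∈ [0,T]`. -/
theorem statement14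
    (ι : Z →L[ℝ] V) (ιX : V →L[ℝ] X)
    (A : Z →L[ℝ] Z →L[ℝ] ℝ) (α : ℝ) (F : Z → ℝ) (DF : Z → V →L[ℝ] ℝ)
    (D2F : Z → Z →L[ℝ] V →L[ℝ] ℝ) (R : V → ℝ) (ℓ : ℝ → V →L[ℝ] ℝ) (L T : ℝ)
    (hstand : StandingAssumptions ι ιX A α F DF D2F R ℓ L T)
    (hC21 : ∀ r : ℝ, 0 < r → ∃ Cr : ℝ, 0 ≤ Cr ∧ ∀ z₁ z₂ v : Z,
      ‖z₁‖ ≤ r → ‖z₂‖ ≤ r →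
      D2F z₁ v (ι v) - D2F z₂ v (ι v) ≤ Cr * ‖z₁ - z₂‖ * ‖v‖ ^ 2)
    (z₀ : Z)
    -- the differential solution `y ∈ C^{0,1}([0,T];Z)`:
    (y : ℝ → Z) (hy : IsDiffSol A DF ℓ R ι T z₀ y)
    (hyLip : ∃ Ly : ℝ≥0, LipschitzOnWith Ly y (Set.Icc (0 : ℝ) T))
    -- local `κ`-uniform convexity of `I` around `y` with radius `Δ`:
    (κ Δ : ℝ) (hκ : 0 < κ) (hΔ : 0 < Δ)
    (hlocconv : ∀ s ∈ Set.Icc (0 : ℝ) T, ∀ w : Z, ‖w - y s‖ ≤ Δ →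
      ∀ v : Z, κ * ‖v‖ ^ 2 ≤ A v v + D2F w v (ι v))
    (δ : ℝ) (hδ0 : 0 < δ) (hδκ : δ ≤ κ) (hLsmall : L ≤ κ - δ)
    (ℓ' : ℝ → V →L[ℝ] ℝ)
    (hℓ' : ∀ s ∈ Set.Icc (0 : ℝ) T, HasDerivAt ℓ (ℓ' s) s)
    (hℓ'BV : BoundedVariationOn ℓ' (Set.Icc (0 : ℝ) T))
    (t : ℝ → ℕ → ℝ) (z : ℝ → ℕ → Z)
    (hscheme : ∀ τ : ℝ, 0 < τ → Scheme A F R ℓ ι T τ z₀ (t τ) (z τ))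
    (N : ℝ → ℕ)
    (hN : ∀ τ : ℝ, 0 < τ → t τ (N τ) = T ∧ ∀ j : ℕ, j < N τ → t τ j < T) :
    ∃ Kloc τbar : ℝ, 0 < Kloc ∧ 0 < τbar ∧
      ∀ τ : ℝ, 0 < τ → τ ≤ τbar → ∀ k : ℕ, 1 ≤ k → k ≤ N τ →
        ∀ s ∈ Set.Icc (t τ (k - 1)) (t τ k),
          ‖(z τ (k - 1) + ((s - t τ (k - 1)) / (t τ k - t τ (k - 1))) •
              (z τ k - z τ (k - 1))) - y s‖ ≤ Kloc * τ := by
  obtain ⟨-, -, hι, -, hsymm, hα, hcoer, hF0, hF, hDF, hgr, hL0, hℓL, hT, hcx, -, hRn, hhom,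
    ρ₁, ρ₂, -, hρ₂, hRb⟩ := hstand
  obtain ⟨Ly, hLy⟩ := hyLip
  obtain ⟨hR0, hRa, hRc⟩ := R_facts hcx hhom
  obtain ⟨y', hy'⟩ := sol_facts hT hR0 hRa hhom hy hLy
  obtain ⟨W, hW0, hW⟩ := bv_primitive hT hℓ'BV
  have hy0 : y 0 = z₀ := hy.1
  have h0T : (0 : ℝ) ∈ Set.Icc (0 : ℝ) T := ⟨le_rfl, hT.le⟩
  have hLκ : L < κ := by linarith
  have hιn : ‖ι‖ ≤ 1 := ContinuousLinearMap.opNorm_le_bound _ zero_le_one (by simpa using hι)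
  have hcomp : ∀ f : V →L[ℝ] ℝ, ‖f.comp ι‖ ≤ ‖f‖ := fun f =>
    (ContinuousLinearMap.opNorm_comp_le f ι).trans
      (mul_le_of_le_one_right (norm_nonneg f) hιn)
  -- Lipschitz bounds
  have hyL : ∀ s ∈ Set.Icc (0 : ℝ) T, ∀ t ∈ Set.Icc (0 : ℝ) T,
      ‖y s - y t‖ ≤ (Ly : ℝ) * |s - t| := by
    intro s hs t ht
    have := hLy.dist_le_mul s hs t ht
    rwa [dist_eq_norm, Real.dist_eq] at this
  have hℓl : ∀ s ∈ Set.Icc (0 : ℝ) T, ∀ t ∈ Set.Icc (0 : ℝ) T,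
      ‖ℓ s - ℓ t‖ ≤ L * |s - t| := by
    intro s hs t ht
    have := hℓL.dist_le_mul s hs t ht
    rwa [dist_eq_norm, Real.dist_eq, Real.coe_toNNReal _ hL0] at this
  have hLr : (0 : ℝ) ≤ (Ly : ℝ) := Ly.2
  -- the radius
  set r : ℝ := ‖z₀‖ + (Ly : ℝ) * T + Δ with hr
  have hr0 : 0 < r := by positivity
  have hball : ∀ s ∈ Set.Icc (0 : ℝ) T, ∀ x : Z, ‖x - y s‖ ≤ Δ → ‖x‖ ≤ r := by
    intro s hs x hx
    have h1 := hyL s hs 0 h0T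
    rw [sub_zero, abs_of_nonneg hs.1, hy0] at h1
    have h2 : (Ly : ℝ) * s ≤ (Ly : ℝ) * T := mul_le_mul_of_nonneg_left hs.2 hLr
    have h3 : ‖x‖ ≤ ‖x - y s‖ + ‖y s - z₀‖ + ‖z₀‖ := by
      calc ‖x‖ = ‖(x - y s) + (y s - z₀) + z₀‖ := by congr 1; abel
        _ ≤ _ := norm_add₃_le
    rw [hr]; linarith
  obtain ⟨C, hC0, hC⟩ := hC21 r hr0
  obtain ⟨M, hM0, hM⟩ := ball_bounds hι hF hDF hgr r hr0.le
  have hG : ∀ x, HasFDerivAt (Gop A DF ι) (Hop A D2F ι x) x := fun x => Gop_deriv hDF x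
  have hHs : ∀ x v w, Hop A D2F ι x v w = Hop A D2F ι x w v := Hop_symm hsymm hF hDF
  have hHl := Hop_lip hHs hC0 hC
  have hHM : ∀ x, ‖x‖ ≤ r → ‖Hop A D2F ι x‖ ≤ ‖A‖ + M := fun x hx => Hop_bound hι (hM x hx).1
  have hGc : Continuous (Gop A DF ι) :=
    continuous_iff_continuousAt.2 fun x => (hG x).continuousAt
  set b : ℝ → Z →L[ℝ] ℝ := fun s => (ℓ s).comp ι with hbdef
  set b' : ℝ → Z →L[ℝ] ℝ := fun s => (ℓ' s).comp ι with hb'def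
  set ρ : Z → ℝ := fun w => R (ι w) with hρdef
  have hDI : ∀ s x, DI A DF ℓ ι s x = Gop A DF ι x - b s := fun s x => rfl
  have hbd : ∀ s ∈ Set.Icc (0 : ℝ) T, HasDerivAt b (b' s) s := by
    intro s hs
    exact (((ContinuousLinearMap.compL ℝ Z V ℝ).flip ι).hasFDerivAt
      (x := ℓ s)).comp_hasDerivAt s (hℓ' s hs)
  have hbL : ∀ s ∈ Set.Icc (0 : ℝ) T, ∀ t ∈ Set.Icc (0 : ℝ) T, s ≤ t →
      ‖b t - b s‖ ≤ L * (t - s) := by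
    intro s hs t ht hst
    have h1 := hℓl t ht s hs
    rw [abs_of_nonneg (sub_nonneg.2 hst)] at h1
    have h2 : b t - b s = (ℓ t - ℓ s).comp ι := by
      simp only [hbdef, ContinuousLinearMap.sub_comp]
    rw [h2]
    exact (hcomp _).trans h1
  have hWb : ∀ s t : ℝ, 0 ≤ s → s ≤ t → t ≤ T →
      ∀ p ∈ Set.Icc s t, ∀ q ∈ Set.Icc s t, ‖b' p - b' q‖ ≤ W t - W s := by
    intro s t h0 hst htT p hp q hq
    have h2 : b' p - b' q = (ℓ' p - ℓ' q).comp ι := by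
      simp only [hb'def, ContinuousLinearMap.sub_comp]
    rw [h2]
    exact (hcomp _).trans (hW s t h0 hst htT p hp q hq)
  have hWT : 0 ≤ W T := by
    have := hW 0 T le_rfl hT.le le_rfl 0 h0T 0 h0T
    rw [hW0, sub_self, norm_zero] at this
    linarith
  have hMb : ∀ s ∈ Set.Icc (0 : ℝ) T, ‖b' s‖ ≤ ‖b' 0‖ + W T := by
    intro s hs
    have h1 := hWb 0 T le_rfl hT.le le_rfl s hs 0 h0T
    have h2 := norm_le_norm_add_norm_sub' (b' s) (b' 0)
    rw [hW0] at h1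
    linarith
  set Mb := ‖b' 0‖ + W T with hMbdef
  have hMb0 : 0 ≤ Mb := by positivity
  have hMℓ : ∀ s ∈ Set.Icc (0 : ℝ) T, ‖ℓ s‖ ≤ ‖ℓ 0‖ + L * T := by
    intro s hs
    have h1 := hℓl s hs 0 h0T
    rw [sub_zero, abs_of_nonneg hs.1] at h1
    have h2 := norm_le_norm_add_norm_sub' (ℓ s) (ℓ 0)
    have h3 : L * s ≤ L * T := mul_le_mul_of_nonneg_left hs.2 hL0
    linarith
  obtain ⟨C0, hC00, hsmall⟩ := step_small hι hsymm hα hcoer hF0 hF hDF hgr hR0 hRn hρ₂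
    (fun v => (hRb v).2) (by positivity) hMℓ r hr0.le
  have hρ0 : ρ 0 = 0 := by simp [hρdef, hR0]
  have hρa : ∀ p q, ρ (p + q) ≤ ρ p + ρ q := by
    intro p q; simp only [hρdef, map_add]; exact hRa _ _
  have hρc : ∀ p q : Z, ∀ θ : ℝ, 0 ≤ θ → θ ≤ 1 → ρ (p + θ • (q - p)) ≤ ρ p + θ * (ρ q - ρ p) := by
    intro p q θ h0 h1
    simp only [hρdef, map_add, map_smul, map_sub]
    exact hRc _ _ θ h0 h1
  have hρh : ∀ (c : ℝ) (v : Z), 0 ≤ c → ρ (c • v) = c * ρ v := by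
    intro c v hc; simp only [hρdef, map_smul]; exact hhom _ _ hc
  have hconv : ∀ s ∈ Set.Icc (0 : ℝ) T, ∀ x, ‖x - y s‖ ≤ Δ →
      ∀ v, κ * ‖v‖ ^ 2 ≤ Hop A D2F ι x v v := by
    intro s hs x hx v
    rw [Hop_apply]; exact hlocconv s hs x hx v
  have hst0 : ∀ w, -(Gop A DF ι (y 0) - b 0) w ≤ ρ w := by
    refine stable_zero hGc hT (fun s hs => (hbd s hs).continuousAt.continuousWithinAt)
      hLy.continuousOn ?_
    filter_upwards [hy'] with s hs hsI
    exact (hs hsI).2.2.1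
  -- the constants
  set Λ := C * (1 + (Ly : ℝ)) / κ with hΛ
  set E := Real.exp (Λ * T) * (2 * Mb + (10 + 4 * (Ly : ℝ)) * (C + 1) * (T + W T)) with hE
  have hE0 : 0 ≤ E := by positivity
  set K := Real.sqrt (E / κ) with hKdef
  have hK0 : 0 ≤ K := Real.sqrt_nonneg _
  have hK : E ≤ κ * K ^ 2 := by
    rw [hKdef, Real.sq_sqrt (by positivity), mul_div_cancel₀ _ hκ.ne']
  set τb := min (min 1 (Δ / (8 * ((Ly : ℝ) + 1)))) (min (Δ ^ 2 / (64 * (C0 + 1))) (Δ / (2 * (K + 1))))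
    with hτb
  refine ⟨K + 1 + Ly, τb, by positivity, by positivity, ?_⟩
  intro τ hτ hττ
  have hτ1 : τ ≤ 1 := hττ.trans ((min_le_left _ _).trans (min_le_left _ _))
  have hτ2 : (Ly : ℝ) * τ ≤ Δ / 8 := by
    have h1 : τ ≤ Δ / (8 * ((Ly : ℝ) + 1)) := hττ.trans ((min_le_left _ _).trans (min_le_right _ _))
    rw [le_div_iff₀ (by positivity)] at h1
    linarith
  have hτ3 : C0 * τ ≤ (Δ / 8) ^ 2 := by
    have h1 : τ ≤ Δ ^ 2 / (64 * (C0 + 1)) :=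
      hττ.trans ((min_le_right _ _).trans (min_le_left _ _))
    rw [le_div_iff₀ (by positivity)] at h1
    have : (Δ / 8) ^ 2 = Δ ^ 2 / 64 := by ring
    rw [this]
    linarith
  have hτ4 : K * τ ≤ Δ / 2 := by
    have h1 : τ ≤ Δ / (2 * (K + 1)) := hττ.trans ((min_le_right _ _).trans (min_le_right _ _))
    rw [le_div_iff₀ (by positivity)] at h1
    linarith
  obtain ⟨ht0, hz0, hstep⟩ := hscheme τ hτ
  obtain ⟨hNT, hNlt⟩ := hN τ hτ
  have hJ : ∀ s x, HasFDerivAt (energy A F ℓ ι s) (Gop A DF ι x - b s) x :=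
    fun s x => energy_deriv hsymm hF s x
  have key : ∀ k : ℕ, k + 1 ≤ N τ → 0 ≤ t τ k ∧ t τ k < T ∧
      Inv (Gop A DF ι) (Hop A D2F ι) b b' ρ y W Λ ((10 + 4 * (Ly : ℝ)) * (C + 1)) K τ
        (t τ k) (z τ (k + 1)) ∧ ‖z τ (k + 1) - z τ k‖ ≤ τ ∧
        ‖ι (z τ (k + 1) - z τ k)‖ < τ := by
    intro k
    induction k with
    | zero =>
      intro hk
      obtain ⟨hd, hmin, -⟩ := hstep 0
      rw [zero_add] at hd hmin ⊢
      rw [hz0, ht0] at *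
      have hzy : z₀ = y 0 := hy0.symm
      have hst : ∀ w, -(Gop A DF ι z₀ - b 0) w ≤ ρ w := by rw [hzy]; exact hst0
      have hz0r : ‖z₀‖ ≤ r := hball 0 h0T z₀ (by rw [hzy]; simpa using hΔ.le)
      have hsq := (hsmall τ hτ hτ1 z₀ (z τ 1) 0 h0T 0 h0T hz0r hst hd hmin).trans hτ3
      have hn : ‖z τ 1 - z₀‖ ≤ Δ / 8 := le_of_sq_le_sq hsq (by positivity)
      obtain ⟨e1, -, -⟩ := scheme_step (κ := κ) (L := L) (τ := τ) (a := 0) (c := 0) (b := b) hι hG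
        hρ0 hρa hρc hκ hL0 hLκ hτ le_rfl (by linarith) (by
          intro θ hθ v
          refine hconv 0 h0T _ ?_ v
          rw [← hzy, add_sub_cancel_left, norm_smul, Real.norm_eq_abs, abs_of_nonneg hθ.1]
          have := mul_le_of_le_one_left (norm_nonneg (z τ 1 - z₀)) hθ.2
          linarith) (hJ 0 (z τ 1)) hst (by simp) hd hmin
      have e2 : ‖z τ 1 - z₀‖ ≤ 0 := by
        have : κ * ‖z τ 1 - z₀‖ ≤ κ * 0 := by linarith
        exact le_of_mul_le_mul_left this hκ
      have e3 : z τ 1 = z₀ := by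
        rw [← sub_eq_zero]; exact norm_le_zero_iff.1 e2
      rw [e3]
      refine ⟨le_rfl, hT, ⟨hst, ?_, 0, ?_, ?_, ?_⟩, ?_, ?_⟩
      · rw [hzy]; simp; positivity
      · simp
      · simp [hρ0]
      · rw [hzy]; simp [hW0]
      · simpa using hτ.le
      · simpa using hτ
    | succ k ih =>
      intro hk
      obtain ⟨ha0, haT, hInv, -, hlt⟩ := ih (by omega)
      obtain ⟨hd, hmin, -⟩ := hstep (k + 1)
      have htk := (hstep k).2.2
      have hcT : t τ (k + 1) < T := hNlt _ (by omega)
      have hc : t τ (k + 1) = t τ k + τ - ‖ι (z τ (k + 1) - z τ k)‖ := by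
        rcases min_choice (t τ k + τ - ‖ι (z τ (k + 1) - z τ k)‖) T with h | h
        · rw [htk, h]
        · rw [htk, h] at hcT; exact absurd hcT (lt_irrefl _)
      generalize t τ k = a at *
      generalize t τ (k + 1) = c at *
      have hac : a < c := by linarith
      have hcaτ : c - a ≤ τ := by
        have := norm_nonneg (ι (z τ (k + 1) - z τ k)); linarith
      set u := z τ (k + 1) with hu
      set x := z τ (k + 1 + 1) with hx
      have hua : ‖u - y a‖ ≤ K * τ := hInv.2.1
      have haI : a ∈ Set.Icc (0 : ℝ) T := ⟨ha0, haT.le⟩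
      have hcI : c ∈ Set.Icc (0 : ℝ) T := ⟨ha0.trans hac.le, hcT.le⟩
      have hur : ‖u‖ ≤ r := hball a haI u (by linarith)
      have hsq := (hsmall τ hτ hτ1 u x a haI c hcI hur hInv.1 hd hmin).trans hτ3
      have hn : ‖x - u‖ ≤ Δ / 8 := le_of_sq_le_sq hsq (by positivity)
      have hclose : ∀ s ∈ Set.Icc a c, ∀ θ ∈ Set.Icc (0 : ℝ) 1,
          ‖u + θ • (x - u) - y s‖ ≤ Δ := by
        intro s hs θ hθ
        have hsI : s ∈ Set.Icc (0 : ℝ) T := ⟨ha0.trans hs.1, hs.2.trans hcT.le⟩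
        have h1 := hyL a haI s hsI
        have h2 : |a - s| ≤ τ := by
          rw [abs_le]; constructor <;> linarith [hs.1, hs.2]
        have h3 : (Ly : ℝ) * |a - s| ≤ (Ly : ℝ) * τ := mul_le_mul_of_nonneg_left h2 hLr
        have h4 : ‖θ • (x - u)‖ ≤ ‖x - u‖ := by
          rw [norm_smul, Real.norm_eq_abs, abs_of_nonneg hθ.1]
          exact mul_le_of_le_one_left (norm_nonneg _) hθ.2
        calc _ = ‖(u - y a) + θ • (x - u) + (y a - y s)‖ := by congr 1; abel
          _ ≤ ‖u - y a‖ + ‖θ • (x - u)‖ + ‖y a - y s‖ := norm_add₃_le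
          _ ≤ Δ := by linarith
      obtain ⟨e1, e2, e3⟩ := scheme_step (κ := κ) (L := L) (τ := τ) (a := a) (c := c) (b := b) hι hG
        hρ0 hρa hρc hκ hL0 hLκ hτ hac.le hcaτ (fun θ hθ v =>
          hconv a haI _ (hclose a ⟨le_rfl, hac.le⟩ θ hθ) v) (hJ c x) hInv.1
          (hbL a haI c hcI hac.le) hd hmin
      have hca : 0 < c - a := sub_pos.2 hac
      have e4 : ‖x - u‖ < c - a := by
        have h1 : κ * ‖x - u‖ < κ * (c - a) :=
          e1.trans_lt (mul_lt_mul_of_pos_right hLκ hca)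
        exact lt_of_mul_lt_mul_left h1 hκ.le
      refine ⟨hcI.1, hcT, ?_, by linarith, (hι _).trans_lt (by linarith)⟩
      exact inv_step hG hHs hC0 (by positivity) hκ hLr hHl hHM hρh hbd hWb hMb hyL hy' hball hconv
        hK0 hK hτ ha0 hac hcT.le hcaτ hInv e2 e3 e4.le hclose
  intro k hk1 hkN s hs
  obtain ⟨k, rfl⟩ : ∃ j, k = j + 1 := ⟨k - 1, by omega⟩
  rw [Nat.add_sub_cancel] at hs ⊢
  obtain ⟨ha0, haT, hInv, hdn, -⟩ := key k hkN
  have htk := (hstep k).2.2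
  have hcT : t τ (k + 1) ≤ T := by rw [htk]; exact min_le_right _ _
  have hcτ : t τ (k + 1) ≤ t τ k + τ := by
    rw [htk]
    refine (min_le_left _ _).trans ?_
    linarith [norm_nonneg (ι (z τ (k + 1) - z τ k))]
  have hua : ‖z τ (k + 1) - y (t τ k)‖ ≤ K * τ := hInv.2.1
  generalize t τ k = a at *
  generalize t τ (k + 1) = c at *
  have hθ0 : 0 ≤ (s - a) / (c - a) := div_nonneg (by linarith [hs.1]) (by linarith [hs.1, hs.2])
  have hθ1 : (s - a) / (c - a) ≤ 1 :=
    div_le_one_of_le₀ (by linarith [hs.2]) (by linarith [hs.1, hs.2])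
  generalize (s - a) / (c - a) = θ at *
  have h1 := hyL a ⟨ha0, haT.le⟩ s ⟨ha0.trans hs.1, hs.2.trans hcT⟩
  have h2 : |a - s| ≤ τ := by
    rw [abs_le]; constructor <;> linarith [hs.1, hs.2]
  have h3 : (Ly : ℝ) * |a - s| ≤ (Ly : ℝ) * τ := mul_le_mul_of_nonneg_left h2 hLr
  have h4 : ‖(1 - θ) • (z τ (k + 1) - z τ k)‖ ≤ ‖z τ (k + 1) - z τ k‖ := by
    rw [norm_smul, Real.norm_eq_abs, abs_of_nonneg (by linarith)]
    exact mul_le_of_le_one_left (norm_nonneg _) (by linarith)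
  calc _ = ‖(z τ (k + 1) - y a) + (-((1 - θ) • (z τ (k + 1) - z τ k))) + (y a - y s)‖ := by
        congr 1; module
    _ ≤ ‖z τ (k + 1) - y a‖ + ‖-((1 - θ) • (z τ (k + 1) - z τ k))‖ + ‖y a - y s‖ := norm_add₃_le
    _ ≤ (K + 1 + Ly) * τ := by rw [norm_neg]; linarith

end RIS
end
end
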